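/- arXiv:2509.21581 — 14 statements merged into one kernel-verified Lean document; each statement's English description precedes it below -/
import Mathlib

section
/- Let β be a nonzero real number and let g : ℝ² → ℂ be the function g(ρ) = exp(−iπ‖ρ‖²). Then for every ρ' ∈ ℝ², the Gaussian-regularized value of H_β[g](ρ') equals g(ρ'); that is, the limit as ε → 0⁺ of (i·e^β/sinh β)·exp(−iπ‖ρ'‖²·coth β)·∫_{ℝ²} exp(−πε‖ρ‖²)·exp(−iπ‖ρ‖²·coth β)·exp(2πi(ρ'⋅ρ)/sinh β)·exp(−iπ‖ρ‖²) dρ is exp(−iπ‖ρ'‖²). In other words, g is an eigenfunction of the hyperbolic fractional Fourier transformation of the first kind H_β with eigenvalue 1. -/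
open MeasureTheory Filter
open scoped RealInnerProductSpace

noncomputable section

/-- The Euclidean plane `ℝ²`. -/
abbrev Plane := EuclideanSpace ℝ (Fin 2)

/-- Gaussian-regularized hyperbolic fractional Fourier transformation of the first kind:
the integrand carries the extra factor `exp (-π ε ‖ρ‖²)`. -/
def fracHreg (β ε : ℝ) (f : Plane → ℂ) (ρ' : Plane) : ℂ :=
  Complex.I * Real.exp β / Real.sinh β *
    Complex.exp (-(Complex.I * Real.pi * ‖ρ'‖ ^ 2 * (Real.cosh β / Real.sinh β))) *
    ∫ ρ : Plane,
      Complex.exp (-(Real.pi * ε * ‖ρ‖ ^ 2 : ℝ)) *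
      Complex.exp (-(Complex.I * Real.pi * ‖ρ‖ ^ 2 * (Real.cosh β / Real.sinh β))) *
      Complex.exp (2 * Real.pi * Complex.I * ⟪ρ', ρ⟫ / Real.sinh β) * f ρ

/-- Closed form of the regularized transform of `exp(−iπ‖ρ‖²)` for a positive regularization
parameter. -/
lemma fracHreg_cexp_neg_I_mul_sq_norm {β ε : ℝ} (hβ : β ≠ 0) (hε : 0 < ε) (ρ' : Plane) :
    fracHreg β ε (fun ρ => Complex.exp (-(Complex.I * Real.pi * ‖ρ‖ ^ 2))) ρ' =
      Complex.I * Real.exp β / Real.sinh β *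
        Complex.exp (-(Complex.I * Real.pi * ‖ρ'‖ ^ 2 * (Real.cosh β / Real.sinh β))) *
        (1 / (ε + Complex.I * Real.exp β / Real.sinh β) *
          Complex.exp ((2 * Real.pi * Complex.I / Real.sinh β) ^ 2 * ‖ρ'‖ ^ 2 /
            (4 * (Real.pi * (ε + Complex.I * Real.exp β / Real.sinh β))))) := by
  have hs : (Real.sinh β : ℂ) ≠ 0 := by
    exact_mod_cast Real.sinh_ne_zero.mpr hβ
  have hpi : (Real.pi : ℂ) ≠ 0 := by exact_mod_cast Real.pi_ne_zero
  have hre : (Complex.I * Real.exp β / Real.sinh β : ℂ).re = 0 := by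
    rw [mul_div_assoc, ← Complex.ofReal_div, Complex.re_mul_ofReal, Complex.I_re, zero_mul]
  have hb : 0 < (Real.pi * (ε + Complex.I * Real.exp β / Real.sinh β) : ℂ).re := by
    rw [Complex.re_ofReal_mul, Complex.add_re, hre, Complex.ofReal_re, add_zero]
    positivity
  have key := GaussianFourier.integral_cexp_neg_mul_sq_norm_add hb (2 * Real.pi * Complex.I / Real.sinh β) ρ'
  rw [finrank_euclideanSpace_fin, Nat.cast_ofNat, div_self two_ne_zero, Complex.cpow_one,
    div_mul_eq_div_div, div_self hpi] at key
  rw [fracHreg, ← key]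
  congr 2 with ρ
  rw [← Complex.exp_add, ← Complex.exp_add, ← Complex.exp_add, ← Real.cosh_add_sinh β]
  congr 1
  push_cast at hs ⊢
  field_simp
  ring

/-- `g(ρ) = exp(−iπ‖ρ‖²)` is an eigenfunction of `H_β` (Gaussian-regularized)
with eigenvalue `1`. -/
theorem stmt0 (β : ℝ) (hβ : β ≠ 0)
    (g : Plane → ℂ) (hg : ∀ ρ, g ρ = Complex.exp (-(Complex.I * Real.pi * ‖ρ‖ ^ 2)))
    (ρ' : Plane) :
    Tendsto (fun ε : ℝ => fracHreg β ε g ρ')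
      (nhdsWithin 0 (Set.Ioi 0)) (nhds (g ρ')) := by
  obtain rfl : g = fun ρ => Complex.exp (-(Complex.I * Real.pi * ‖ρ‖ ^ 2)) := funext hg
  have hs : (Real.sinh β : ℂ) ≠ 0 := by
    exact_mod_cast Real.sinh_ne_zero.mpr hβ
  have hpi : (Real.pi : ℂ) ≠ 0 := by exact_mod_cast Real.pi_ne_zero
  have he : (Real.exp β : ℂ) ≠ 0 := by exact_mod_cast Real.exp_ne_zero β
  have hA : (Complex.I * Real.exp β / Real.sinh β : ℂ) ≠ 0 :=
    div_ne_zero (mul_ne_zero Complex.I_ne_zero he) hs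
  refine Tendsto.congr' (eventually_nhdsWithin_of_forall fun ε hε =>
    (fracHreg_cexp_neg_I_mul_sq_norm hβ hε ρ').symm) (Tendsto.mono_left ?_ nhdsWithin_le_nhds)
  have hcont : ContinuousAt (fun ε : ℝ => Complex.I * Real.exp β / Real.sinh β *
        Complex.exp (-(Complex.I * Real.pi * ‖ρ'‖ ^ 2 * (Real.cosh β / Real.sinh β))) *
        (1 / (ε + Complex.I * Real.exp β / Real.sinh β) *
          Complex.exp ((2 * Real.pi * Complex.I / Real.sinh β) ^ 2 * ‖ρ'‖ ^ 2 /
            (4 * (Real.pi * (ε + Complex.I * Real.exp β / Real.sinh β)))))) 0 := by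
    have hsum : ContinuousAt
        (fun ε : ℝ => (ε + Complex.I * Real.exp β / Real.sinh β : ℂ)) 0 := by fun_prop
    refine continuousAt_const.mul ((continuousAt_const.div hsum ?_).mul
      (continuousAt_const.div (continuousAt_const.mul (continuousAt_const.mul hsum)) ?_).cexp)
    · simpa using hA
    · simpa using hA
  convert! hcont.tendsto using 1
  have hexp : (Real.cosh β + Real.sinh β : ℂ) * (Real.cosh β - Real.sinh β) = 1 := by
    exact_mod_cast (by linear_combination Real.cosh_sq_sub_sinh_sq β :
      (Real.cosh β + Real.sinh β) * (Real.cosh β - Real.sinh β) = 1)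
  have hexponent : (2 * Real.pi * Complex.I / Real.sinh β : ℂ) ^ 2 * ‖ρ'‖ ^ 2 /
      (4 * (Real.pi * (Complex.I * Real.exp β / Real.sinh β))) =
      Complex.I * Real.pi * ‖ρ'‖ ^ 2 * ((Real.cosh β - Real.sinh β) / Real.sinh β) := by
    have hcs : (Real.exp β : ℂ) = Real.cosh β + Real.sinh β := by
      exact_mod_cast (Real.cosh_add_sinh β).symm
    rw [← hcs] at hexp
    have hI := Complex.I_ne_zero
    generalize (Real.exp β : ℂ) = e at *
    generalize (Real.sinh β : ℂ) = s at *
    generalize (Real.cosh β : ℂ) = c at *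
    field_simp
    linear_combination (-4 * (‖ρ'‖ : ℂ) ^ 2) * hexp
  rw [Complex.ofReal_zero, zero_add, hexponent, mul_mul_mul_comm, mul_one_div_cancel hA, one_mul,
    ← Complex.exp_add]
  refine congrArg (fun z => nhds (Complex.exp z)) ?_
  field_simp
  ring

end
end

section
/- Let β be a nonzero real number and let h : ℝ² → ℂ be the function h(ρ) = exp(iπ‖ρ‖²). Then for every ρ' ∈ ℝ², the Gaussian-regularized value of H_β[h](ρ') equals e^{2β}·h(ρ'); that is, the limit as ε → 0⁺ of (i·e^β/sinh β)·exp(−iπ‖ρ'‖²·coth β)·∫_{ℝ²} exp(−πε‖ρ‖²)·exp(−iπ‖ρ‖²·coth β)·exp(2πi(ρ'⋅ρ)/sinh β)·exp(iπ‖ρ‖²) dρ is e^{2β}·exp(iπ‖ρ'‖²). In other words, h is an eigenfunction of the hyperbolic fractional Fourier transformation of the first kind H_β with eigenvalue e^{2β}. -/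
open MeasureTheory Filter
open scoped RealInnerProductSpace

noncomputable section

/-- Closed form of the regularized transform of `exp (iπ‖ρ‖²)`, from the Gaussian integral with
complex parameter `π (ε + i (coth β - 1))`. -/
lemma fracHreg_cexp_sq_norm (β : ℝ) {ε : ℝ} (hε : 0 < ε) (ρ' : Plane) :
    fracHreg β ε (fun ρ => Complex.exp (Complex.I * Real.pi * ‖ρ‖ ^ 2)) ρ' =
      Complex.I * Real.exp β / Real.sinh β *
        Complex.exp (-(Complex.I * Real.pi * ‖ρ'‖ ^ 2 * (Real.cosh β / Real.sinh β))) *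
        ((ε + Complex.I * (Real.cosh β / Real.sinh β - 1 : ℝ) : ℂ)⁻¹ *
          Complex.exp (-(Real.pi * ‖ρ'‖ ^ 2 / (Real.sinh β : ℂ) ^ 2) *
            (ε + Complex.I * (Real.cosh β / Real.sinh β - 1 : ℝ) : ℂ)⁻¹)) := by
  set z : ℂ := ε + Complex.I * (Real.cosh β / Real.sinh β - 1 : ℝ) with hz
  have hπ : (Real.pi : ℂ) ≠ 0 := by exact_mod_cast Real.pi_ne_zero
  have hzre : z.re = ε := by
    simp only [hz, Complex.add_re, Complex.ofReal_re, Complex.re_mul_ofReal, Complex.I_re,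
      zero_mul, add_zero]
  have hz0 : z ≠ 0 := fun h => hε.ne' (by rw [← hzre, h, Complex.zero_re])
  have hb : 0 < (Real.pi * z).re := by
    rw [Complex.re_ofReal_mul, hzre]
    positivity
  have key := GaussianFourier.integral_cexp_neg_mul_sq_norm_add hb
    (2 * Real.pi * Complex.I / Real.sinh β) ρ'
  unfold fracHreg
  congr 1
  have hexponent : (2 * Real.pi * Complex.I / Real.sinh β) ^ 2 * (‖ρ'‖ : ℂ) ^ 2 /
      (4 * (Real.pi * z)) = -(Real.pi * ‖ρ'‖ ^ 2 / (Real.sinh β : ℂ) ^ 2) * z⁻¹ := by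
    rw [div_pow, mul_pow, Complex.I_sq]
    field_simp
    ring
  have hfactor : (Real.pi / (Real.pi * z)) ^ ((Module.finrank ℝ Plane : ℂ) / 2) = z⁻¹ := by
    rw [finrank_euclideanSpace_fin, Nat.cast_ofNat, div_self two_ne_zero, Complex.cpow_one]
    field_simp
  rw [hexponent, hfactor] at key
  rw [← key]
  congr 1 with ρ
  simp only [← Complex.exp_add]
  congr 1
  rw [hz]
  push_cast
  ring

/-- `h(ρ) = exp(iπ‖ρ‖²)` is an eigenfunction of `H_β` (Gaussian-regularized)
with eigenvalue `e^(2β)`. -/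
theorem stmt1 (β : ℝ) (hβ : β ≠ 0)
    (h : Plane → ℂ) (hh : ∀ ρ, h ρ = Complex.exp (Complex.I * Real.pi * ‖ρ‖ ^ 2))
    (ρ' : Plane) :
    Tendsto (fun ε : ℝ => fracHreg β ε h ρ')
      (nhdsWithin 0 (Set.Ioi 0)) (nhds (Real.exp (2 * β) * h ρ')) := by
  have hs : Real.sinh β ≠ 0 := Real.sinh_ne_zero.mpr hβ
  obtain rfl : h = fun ρ => Complex.exp (Complex.I * Real.pi * ‖ρ‖ ^ 2) := funext hh
  have hcoth : Real.cosh β / Real.sinh β - 1 = (Real.exp β * Real.sinh β)⁻¹ := by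
    rw [div_sub_one hs, Real.cosh_sub_sinh, Real.exp_neg]
    field_simp
  have hs' : (Real.sinh β : ℂ) ≠ 0 := by exact_mod_cast hs
  have he : (Real.exp β : ℂ) ≠ 0 := by exact_mod_cast Real.exp_ne_zero β
  have hz0 : (((0 : ℝ) : ℂ) + Complex.I * (Real.cosh β / Real.sinh β - 1 : ℝ)) ≠ 0 := by
    rw [hcoth, Complex.ofReal_zero, zero_add]
    push_cast [-Complex.ofReal_exp, -Complex.ofReal_sinh]
    exact mul_ne_zero Complex.I_ne_zero (inv_ne_zero (mul_ne_zero he hs'))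
  have hinv : (((0 : ℝ) : ℂ) + Complex.I * (Real.cosh β / Real.sinh β - 1 : ℝ))⁻¹ =
      -Complex.I * (Real.exp β * Real.sinh β) := by
    rw [hcoth, Complex.ofReal_zero, zero_add, mul_inv, Complex.inv_I, Complex.ofReal_inv, inv_inv,
      Complex.ofReal_mul]
  have hcont : Tendsto
      (fun ε : ℝ => (ε + Complex.I * (Real.cosh β / Real.sinh β - 1 : ℝ) : ℂ)⁻¹)
      (nhdsWithin 0 (Set.Ioi 0)) (nhds (-Complex.I * (Real.exp β * Real.sinh β))) := by
    rw [← hinv]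
    exact (((Complex.continuous_ofReal.tendsto 0).add_const _).inv₀ hz0).mono_left
      nhdsWithin_le_nhds
  have hlim := (hcont.mul ((hcont.const_mul
    (-(Real.pi * ‖ρ'‖ ^ 2 / (Real.sinh β : ℂ) ^ 2))).cexp)).const_mul
    (Complex.I * Real.exp β / Real.sinh β *
      Complex.exp (-(Complex.I * Real.pi * ‖ρ'‖ ^ 2 * (Real.cosh β / Real.sinh β))))
  have hexp : (Real.exp β : ℂ) = Real.cosh β + Real.sinh β := by
    rw [← Complex.ofReal_add, Real.cosh_add_sinh]
  have hval : Complex.I * Real.exp β / Real.sinh β *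
      Complex.exp (-(Complex.I * Real.pi * ‖ρ'‖ ^ 2 * (Real.cosh β / Real.sinh β))) *
      (-Complex.I * (Real.exp β * Real.sinh β) *
        Complex.exp (-(Real.pi * ‖ρ'‖ ^ 2 / (Real.sinh β : ℂ) ^ 2) *
          (-Complex.I * (Real.exp β * Real.sinh β)))) =
      Real.exp (2 * β) * Complex.exp (Complex.I * Real.pi * ‖ρ'‖ ^ 2) := by
    have hphase : Complex.I * Real.pi * (‖ρ'‖ : ℂ) ^ 2 =
        -(Complex.I * Real.pi * ‖ρ'‖ ^ 2 * (Real.cosh β / Real.sinh β)) +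
        -(Real.pi * ‖ρ'‖ ^ 2 / (Real.sinh β : ℂ) ^ 2) *
          (-Complex.I * (Real.exp β * Real.sinh β)) := by
      rw [hexp]
      field_simp
      ring
    have hscalar : (Real.exp (2 * β) : ℂ) = Complex.I * Real.exp β / Real.sinh β *
        (-Complex.I * (Real.exp β * Real.sinh β)) := by
      rw [two_mul, Real.exp_add, Complex.ofReal_mul]
      field_simp
      rw [Complex.I_sq]
      ring
    rw [congrArg Complex.exp hphase, Complex.exp_add, hscalar]
    ring
  rw [hval] at hlim
  refine hlim.congr' ?_
  filter_upwards [self_mem_nhdsWithin] with ε hε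
  exact (fracHreg_cexp_sq_norm β hε ρ').symm

end
end

section
/- Let β and β' be nonzero real numbers with β + β' ≠ 0, and let f ∈ 𝓢(ℝ², ℂ). Then for every ρ'' ∈ ℝ², H_{β'}[H_β[f]](ρ'') = H_{β'+β}[f](ρ''), where the outer transformation H_{β'} is applied to the function ρ' ↦ H_β[f](ρ'). That is, the composition law H_{β'} ∘ H_β = H_{β'+β} holds for hyperbolic fractional Fourier transformations of the first kind. -/
open MeasureTheory Filter
open scoped RealInnerProductSpace

noncomputable section

/-- Hyperbolic fractional-order Fourier transformation of the first kind of order `β`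
(for `β ≠ 0`), with `coth β = cosh β / sinh β`. -/
def fracH (β : ℝ) (f : Plane → ℂ) (ρ' : Plane) : ℂ :=
  Complex.I * Real.exp β / Real.sinh β *
    Complex.exp (-(Complex.I * Real.pi * ‖ρ'‖ ^ 2 * (Real.cosh β / Real.sinh β))) *
    ∫ ρ : Plane,
      Complex.exp (-(Complex.I * Real.pi * ‖ρ‖ ^ 2 * (Real.cosh β / Real.sinh β))) *
      Complex.exp (2 * Real.pi * Complex.I * ⟪ρ', ρ⟫ / Real.sinh β) * f ρ

open scoped FourierTransform SchwartzMap Topology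

theorem iteratedDeriv_cexp_ofReal_mul_I (n : ℕ) :
    iteratedDeriv n (fun t : ℝ => Complex.exp (t * Complex.I)) =
      fun t : ℝ => Complex.I ^ n * Complex.exp (t * Complex.I) := by
  induction n with
  | zero => simp
  | succ n ih =>
    rw [iteratedDeriv_succ, ih]
    ext t
    have h : HasDerivAt (fun t : ℝ => Complex.exp (t * Complex.I))
        (Complex.exp (t * Complex.I) * (1 * Complex.I)) t :=
      ((Complex.ofRealCLM.hasDerivAt (x := t)).mul_const Complex.I).cexp
    rw [(h.const_mul (Complex.I ^ n)).deriv]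
    ring

theorem hasTemperateGrowth_cexp_ofReal_mul_I :
    (fun t : ℝ => Complex.exp (t * Complex.I)).HasTemperateGrowth := by
  refine ⟨(Complex.ofRealCLM.contDiff.mul contDiff_const).cexp, fun n => ⟨0, 1, fun t => ?_⟩⟩
  simp [norm_iteratedFDeriv_eq_norm_iteratedDeriv, iteratedDeriv_cexp_ofReal_mul_I,
    Complex.norm_exp_ofReal_mul_I]

theorem hasTemperateGrowth_chirp {V : Type*} [NormedAddCommGroup V] [InnerProductSpace ℝ V]
    (c : ℝ) : (fun v : V => Complex.exp (((c * ‖v‖ ^ 2 : ℝ) : ℂ) * Complex.I)).HasTemperateGrowth :=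
  hasTemperateGrowth_cexp_ofReal_mul_I.comp (f := fun v : V => c * ‖v‖ ^ 2) (by fun_prop)

section Chirp

variable {V : Type*} [NormedAddCommGroup V] [InnerProductSpace ℝ V] [FiniteDimensional ℝ V]
  [MeasurableSpace V] [BorelSpace V]

theorem integral_gaussian_mul_fourier (hV : Module.finrank ℝ V = 2) {b : ℂ} (hb : 0 < b.re)
    (x : V) (h : 𝓢(V, ℂ)) :
    ∫ v, Complex.exp (-b * ‖v‖ ^ 2 + 2 * Real.pi * Complex.I * ⟪x, v⟫) * 𝓕 h v =
      ∫ w, Real.pi / b * Complex.exp (-Real.pi ^ 2 * ‖x - w‖ ^ 2 / b) * h w := by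
  have hg := GaussianFourier.integrable_cexp_neg_mul_sq_norm_add hb (2 * Real.pi * Complex.I) x
  have key := VectorFourier.integral_fourierIntegral_smul_eq_flip (L := innerₗ V)
    Real.continuous_fourierChar continuous_inner (h.integrable (μ := volume)) hg
  rw [flip_innerₗ] at key
  change ∫ v, 𝓕 h v * _ = ∫ w, h w * 𝓕 (fun v : V => Complex.exp _) w at key
  simp_rw [fourier_gaussian_innerProductSpace' hb, hV] at key
  simpa [mul_comm] using key

/-- Pairing the Fourier transform of a Schwartz function on a plane with a chirp; obtained from
the Gaussian case by letting the real part of the Gaussian parameter tend to zero. -/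
theorem integral_chirp_mul_fourier (hV : Module.finrank ℝ V = 2) {c : ℝ} (hc : c ≠ 0)
    (x : V) (h : 𝓢(V, ℂ)) :
    ∫ v, Complex.exp (-(Real.pi * c * Complex.I) * ‖v‖ ^ 2 + 2 * Real.pi * Complex.I * ⟪x, v⟫) *
        𝓕 h v =
      ∫ w, 1 / (Complex.I * c) * Complex.exp (Complex.I * Real.pi / c * ‖x - w‖ ^ 2) * h w := by
  have hpi := Real.pi_ne_zero
  let b : ℝ → ℂ := fun ε => ε + Real.pi * c * Complex.I
  have hre (ε : ℝ) : (b ε).re = ε := by simp [b]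
  have him (ε : ℝ) : (b ε).im = Real.pi * c := by simp [b]
  have hb0 : b 0 = Real.pi * c * Complex.I := by simp [b]
  have hbne (ε : ℝ) : b ε ≠ 0 := fun h0 => by
    have := him ε
    rw [h0, Complex.zero_im] at this
    exact mul_ne_zero hpi hc this.symm
  have hbcont : Continuous b := by fun_prop
  have hpos : ∀ᶠ ε : ℝ in 𝓝[>] 0, 0 < ε := self_mem_nhdsWithin
  have hleft : Tendsto (fun ε : ℝ => ∫ v, Complex.exp (-b ε * ‖v‖ ^ 2 +
      2 * Real.pi * Complex.I * ⟪x, v⟫) * 𝓕 h v) (𝓝[>] 0)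
      (𝓝 (∫ v, Complex.exp (-b 0 * ‖v‖ ^ 2 + 2 * Real.pi * Complex.I * ⟪x, v⟫) * 𝓕 h v)) := by
    refine tendsto_integral_filter_of_dominated_convergence (fun v => ‖𝓕 h v‖) ?_ ?_
      (𝓕 h).integrable.norm ?_
    · exact .of_forall fun ε => (Continuous.mul (by fun_prop)
        (𝓕 h).continuous).aestronglyMeasurable
    · filter_upwards [hpos] with ε hε
      refine .of_forall fun v => ?_
      rw [norm_mul]
      refine mul_le_of_le_one_left (norm_nonneg _) ?_
      rw [Complex.norm_exp, Real.exp_le_one_iff]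
      have : (-b ε * ‖v‖ ^ 2 + 2 * Real.pi * Complex.I * ⟪x, v⟫).re = -(ε * ‖v‖ ^ 2) := by
        simp [← Complex.ofReal_pow, hre]
      rw [this]
      have : 0 ≤ ε * ‖v‖ ^ 2 := by positivity
      linarith
    · refine .of_forall fun v => ?_
      refine (Continuous.tendsto ?_ 0).mono_left nhdsWithin_le_nhds
      fun_prop
  have hright : Tendsto (fun ε : ℝ => ∫ w, Real.pi / b ε *
      Complex.exp (-Real.pi ^ 2 * ‖x - w‖ ^ 2 / b ε) * h w) (𝓝[>] 0)
      (𝓝 (∫ w, Real.pi / b 0 * Complex.exp (-Real.pi ^ 2 * ‖x - w‖ ^ 2 / b 0) * h w)) := by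
    refine tendsto_integral_filter_of_dominated_convergence (fun v => |c|⁻¹ * ‖h v‖) ?_ ?_
      (h.integrable.norm.const_mul _) ?_
    · exact .of_forall fun ε => (Continuous.mul (by fun_prop) h.continuous).aestronglyMeasurable
    · filter_upwards [hpos] with ε hε
      refine .of_forall fun w => ?_
      rw [norm_mul, norm_mul]
      gcongr
      have hnorm : ‖(Real.pi : ℂ) / b ε‖ ≤ |c|⁻¹ := by
        have h1 : Real.pi * |c| ≤ ‖b ε‖ := by
          have := Complex.abs_im_le_norm (b ε)
          rwa [him, abs_mul, abs_of_pos Real.pi_pos] at this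
        have h2 : 0 < |c| := abs_pos.2 hc
        rw [norm_div, Complex.norm_real, Real.norm_of_nonneg Real.pi_pos.le, inv_eq_one_div,
          div_le_div_iff₀ (norm_pos_iff.2 (hbne ε)) h2]
        linarith
      have hexp : ‖Complex.exp (-Real.pi ^ 2 * ‖x - w‖ ^ 2 / b ε)‖ ≤ 1 := by
        rw [Complex.norm_exp, Real.exp_le_one_iff]
        have : (-Real.pi ^ 2 * ‖x - w‖ ^ 2 / b ε : ℂ) =
            ((-(Real.pi ^ 2 * ‖x - w‖ ^ 2) : ℝ) : ℂ) * (b ε)⁻¹ := by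
          push_cast; ring
        rw [this, Complex.re_ofReal_mul, Complex.inv_re, hre]
        have : 0 ≤ Real.pi ^ 2 * ‖x - w‖ ^ 2 * (ε / Complex.normSq (b ε)) :=
          mul_nonneg (by positivity) (div_nonneg hε.le (Complex.normSq_nonneg _))
        linarith
      simpa using mul_le_mul hnorm hexp (norm_nonneg _) (by positivity)
    · refine .of_forall fun v => ?_
      refine (Continuous.tendsto ?_ 0).mono_left nhdsWithin_le_nhds
      fun_prop (disch := exact hbne _)
  have heq := tendsto_nhds_unique (hleft.congr' (by
    filter_upwards [hpos] with ε hε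
    exact integral_gaussian_mul_fourier hV (by rwa [hre]) x h)) hright
  rw [hb0] at heq
  have hpi' : (Real.pi : ℂ) ≠ 0 := by exact_mod_cast hpi
  have hc' : (c : ℂ) ≠ 0 := by exact_mod_cast hc
  refine heq.trans (integral_congr_ae (.of_forall fun w => ?_))
  have h1 : (Real.pi : ℂ) / (Real.pi * c * Complex.I) = 1 / (Complex.I * c) := by
    field_simp
  have h2 : -(Real.pi : ℂ) ^ 2 * ‖x - w‖ ^ 2 / (Real.pi * c * Complex.I) =
      Complex.I * Real.pi / c * ‖x - w‖ ^ 2 := by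
    field_simp
    simp
  simp only [h1, h2]

end Chirp

/-- On Schwartz functions, `fracH` is the Fourier transform of a chirped function, rescaled and
chirped again. -/
theorem fracH_eq_fourier (β : ℝ) (f : 𝓢(Plane, ℂ)) (r : Plane) :
    fracH β f r = Complex.I * Real.exp β / Real.sinh β *
      Complex.exp (-(Complex.I * Real.pi * ‖r‖ ^ 2 * (Real.cosh β / Real.sinh β))) *
      𝓕 (SchwartzMap.smulLeftCLM ℂ (fun v : Plane => Complex.exp
        (((-(Real.pi * (Real.cosh β / Real.sinh β)) * ‖v‖ ^ 2 : ℝ) : ℂ) * Complex.I)) f)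
        ((-(Real.sinh β)⁻¹) • r) := by
  rw [fracH, SchwartzMap.fourier_coe, Real.fourier_eq']
  congr 1
  refine integral_congr_ae (.of_forall fun v => ?_)
  simp only [SchwartzMap.smulLeftCLM_apply_apply (hasTemperateGrowth_chirp _), smul_eq_mul,
    inner_smul_right, real_inner_comm r v]
  rw [← mul_assoc, ← Complex.exp_add, ← Complex.exp_add]
  congr 2
  push_cast
  ring

/-- Composition law for hyperbolic fractional Fourier transformations of the first kind:
`H_{β'} ∘ H_β = H_{β'+β}` on Schwartz functions. -/
theorem stmt2 (β β' : ℝ) (hβ : β ≠ 0) (hβ' : β' ≠ 0) (hsum : β + β' ≠ 0)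
    (f : SchwartzMap Plane ℂ) (ρ'' : Plane) :
    fracH β' (fun ρ' => fracH β (⇑f) ρ') ρ'' = fracH (β' + β) (⇑f) ρ'' := by
  set s := Real.sinh β with hs
  set s' := Real.sinh β' with hs'
  set C := Real.cosh β with hC
  set C' := Real.cosh β' with hC'
  have hS : Real.sinh (β' + β) = s' * C + C' * s := Real.sinh_add _ _
  have hcosh : Real.cosh (β' + β) = C' * C + s' * s := Real.cosh_add _ _
  have hs0 : s ≠ 0 := Real.sinh_ne_zero.2 hβ
  have hs0' : s' ≠ 0 := Real.sinh_ne_zero.2 hβ'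
  have hS0 : s' * C + C' * s ≠ 0 := by
    rw [← hS]
    exact Real.sinh_ne_zero.2 (by rwa [add_comm])
  have hsq' : C' ^ 2 = s' ^ 2 + 1 := Real.cosh_sq β'
  have hsq : C ^ 2 = s ^ 2 + 1 := Real.cosh_sq β
  have hsc : (s : ℂ) ≠ 0 := by exact_mod_cast hs0
  have hsc' : (s' : ℂ) ≠ 0 := by exact_mod_cast hs0'
  have hSc : (s' * C + C' * s : ℂ) ≠ 0 := by exact_mod_cast hS0
  have hsqc' : (C' : ℂ) ^ 2 = s' ^ 2 + 1 := by exact_mod_cast hsq'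
  have hsqc : (C : ℂ) ^ 2 = s ^ 2 + 1 := by exact_mod_cast hsq
  simp_rw [fracH_eq_fourier β f]
  rw [fracH, fracH, hS, hcosh]
  simp only [← hs, ← hs', ← hC, ← hC']
  set h : 𝓢(Plane, ℂ) := SchwartzMap.smulLeftCLM ℂ (fun v : Plane => Complex.exp
    (((-(Real.pi * (C / s)) * ‖v‖ ^ 2 : ℝ) : ℂ) * Complex.I)) f with hh
  have hc : (s' * C + C' * s) * s / s' ≠ 0 := div_ne_zero (mul_ne_zero hS0 hs0) hs0'
  have key := integral_chirp_mul_fourier (V := Plane) (by simp) hc ((-(s / s')) • ρ'') h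
  have hscale := Measure.integral_comp_smul (volume : Measure Plane)
    (fun v => Complex.I * Real.exp β / s * (Complex.exp
      (-(Real.pi * (((s' * C + C' * s) * s / s' : ℝ) : ℂ) * Complex.I) * ‖v‖ ^ 2 +
        2 * Real.pi * Complex.I * ⟪(-(s / s')) • ρ'', v⟫) * 𝓕 h v)) (-s⁻¹)
  rw [integral_const_mul, integral_const_mul, key, finrank_euclideanSpace_fin] at hscale
  have hfac : |((-s⁻¹) ^ 2)⁻¹| = s ^ 2 := by
    rw [neg_sq, inv_pow, inv_inv, abs_of_nonneg (sq_nonneg s)]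
  rw [hfac] at hscale
  have hint : ∀ r : Plane,
      Complex.exp (-(Complex.I * Real.pi * ‖r‖ ^ 2 * (C' / s'))) *
        Complex.exp (2 * Real.pi * Complex.I * ⟪ρ'', r⟫ / s') *
        (Complex.I * Real.exp β / s * Complex.exp (-(Complex.I * Real.pi * ‖r‖ ^ 2 * (C / s))) *
          𝓕 h ((-s⁻¹) • r)) =
      Complex.I * Real.exp β / s * (Complex.exp
        (-(Real.pi * (((s' * C + C' * s) * s / s' : ℝ) : ℂ) * Complex.I) * ‖(-s⁻¹) • r‖ ^ 2 +
        2 * Real.pi * Complex.I * ⟪(-(s / s')) • ρ'', (-s⁻¹) • r⟫) * 𝓕 h ((-s⁻¹) • r)) := by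
    intro r
    have hnorm : (‖(-s⁻¹) • r‖ : ℂ) ^ 2 = (s : ℂ)⁻¹ ^ 2 * ‖r‖ ^ 2 := by
      rw [norm_smul, ← Complex.ofReal_pow, mul_pow, Real.norm_eq_abs, sq_abs]
      push_cast
      ring
    have hexp : Complex.exp (-(Complex.I * Real.pi * ‖r‖ ^ 2 * (C' / s'))) *
        Complex.exp (2 * Real.pi * Complex.I * ⟪ρ'', r⟫ / s') *
        Complex.exp (-(Complex.I * Real.pi * ‖r‖ ^ 2 * (C / s))) = Complex.exp
        (-(Real.pi * (((s' * C + C' * s) * s / s' : ℝ) : ℂ) * Complex.I) * ‖(-s⁻¹) • r‖ ^ 2 +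
        2 * Real.pi * Complex.I * ⟪(-(s / s')) • ρ'', (-s⁻¹) • r⟫) := by
      rw [← Complex.exp_add, ← Complex.exp_add, hnorm, real_inner_smul_left,
        real_inner_smul_right]
      congr 1
      push_cast
      field_simp
      ring
    rw [← hexp]
    ring
  rw [integral_congr_ae (.of_forall hint), integral_const_mul, hscale, Complex.real_smul, ← integral_const_mul,
    ← integral_const_mul, ← integral_const_mul, ← integral_const_mul]
  refine integral_congr_ae (.of_forall fun w => ?_)
  have hnorm : (‖(-(s / s')) • ρ'' - w‖ : ℂ) ^ 2 =
      ((s : ℂ) / s') ^ 2 * ‖ρ''‖ ^ 2 + 2 * (s / s') * ⟪ρ'', w⟫ + ‖w‖ ^ 2 := by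
    rw [← Complex.ofReal_pow, norm_sub_sq_real, norm_smul, mul_pow, Real.norm_eq_abs, sq_abs,
      real_inner_smul_left]
    push_cast
    ring
  have hexp : Complex.exp (-(Complex.I * Real.pi * ‖ρ''‖ ^ 2 * (C' / s'))) *
      (Complex.exp (Complex.I * Real.pi / (((s' * C + C' * s) * s / s' : ℝ) : ℂ) *
        ‖(-(s / s')) • ρ'' - w‖ ^ 2) *
      Complex.exp (((-(Real.pi * (C / s)) * ‖w‖ ^ 2 : ℝ) : ℂ) * Complex.I)) =
      Complex.exp (-(Complex.I * Real.pi * ‖ρ''‖ ^ 2 * ((C' * C + s' * s) / (s' * C + C' * s)))) *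
      (Complex.exp (-(Complex.I * Real.pi * ‖w‖ ^ 2 * ((C' * C + s' * s) / (s' * C + C' * s)))) *
      Complex.exp (2 * Real.pi * Complex.I * ⟪ρ'', w⟫ / (s' * C + C' * s))) := by
    simp only [← Complex.exp_add, hnorm]
    congr 1
    push_cast
    field_simp
    have e1 : (C' * (s' * C + C' * s) - s : ℂ) = s' * (C' * C + s' * s) := by
      linear_combination (s : ℂ) * hsqc'
    have e2 : (C * (s' * C + C' * s) - s' : ℂ) = s * (C' * C + s' * s) := by
      linear_combination (s' : ℂ) * hsqc
    linear_combination (-(s : ℂ) * ‖ρ''‖ ^ 2) * e1 - (s' * ‖w‖ ^ 2 : ℂ) * e2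
  have hconst : Complex.I * Real.exp β' / s' * (((s ^ 2 : ℝ) : ℂ) * (Complex.I * Real.exp β / s *
      (1 / (Complex.I * (((s' * C + C' * s) * s / s' : ℝ) : ℂ))))) =
      Complex.I * Real.exp (β' + β) / (s' * C + C' * s) := by
    rw [Real.exp_add]
    push_cast
    field_simp
  beta_reduce
  rw [hh, SchwartzMap.smulLeftCLM_apply_apply (hasTemperateGrowth_chirp _), smul_eq_mul]
  push_cast at hexp hconst ⊢
  linear_combination f w * (Complex.I * Complex.exp (β' + β) / (s' * C + C' * s)) * hexp
    + f w * Complex.exp (-(Complex.I * Real.pi * ‖ρ''‖ ^ 2 * (C' / s'))) *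
      (Complex.exp (Complex.I * Real.pi / ((s' * C + C' * s) * s / s') *
        ‖(-(s / s')) • ρ'' - w‖ ^ 2) *
      Complex.exp (-(Real.pi * (C / s)) * ‖w‖ ^ 2 * Complex.I)) * hconst

end
end

section
/- Let β be a real number and let g, h : ℝ² → ℂ be the functions g(ρ) = exp(−iπ‖ρ‖²) and h(ρ) = exp(iπ‖ρ‖²). Then for every ρ' ∈ ℝ², the Gaussian-regularized value of K_β[g](ρ') equals h(ρ'); that is, the limit as ε → 0⁺ of (i·e^β/cosh β)·exp(iπ‖ρ'‖²·tanh β)·∫_{ℝ²} exp(−πε‖ρ‖²)·exp(−iπ‖ρ‖²·tanh β)·exp(2πi(ρ'⋅ρ)/cosh β)·exp(−iπ‖ρ‖²) dρ is exp(iπ‖ρ'‖²). -/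
open MeasureTheory Filter
open scoped RealInnerProductSpace

noncomputable section

/-- Gaussian-regularized hyperbolic fractional Fourier transformation of the second kind:
the integrand carries the extra factor `exp (-π ε ‖ρ‖²)`. -/
def fracKreg (β ε : ℝ) (f : Plane → ℂ) (ρ' : Plane) : ℂ :=
  Complex.I * Real.exp β / Real.cosh β *
    Complex.exp (Complex.I * Real.pi * ‖ρ'‖ ^ 2 * Real.tanh β) *
    ∫ ρ : Plane,
      Complex.exp (-(Real.pi * ε * ‖ρ‖ ^ 2 : ℝ)) *
      Complex.exp (-(Complex.I * Real.pi * ‖ρ‖ ^ 2 * Real.tanh β)) *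
      Complex.exp (2 * Real.pi * Complex.I * ⟪ρ', ρ⟫ / Real.cosh β) * f ρ

/-- Closed form of the regularized transform of `exp (-iπ‖ρ‖²)`, for positive regularization. -/
lemma fracKreg_chirp (β : ℝ) {ε : ℝ} (hε : 0 < ε) (ρ' : Plane) :
    fracKreg β ε (fun ρ => Complex.exp (-(Complex.I * Real.pi * ‖ρ‖ ^ 2))) ρ' =
      Complex.I * Real.exp β / Real.cosh β *
        Complex.exp (Complex.I * Real.pi * ‖ρ'‖ ^ 2 * Real.tanh β) *
        ((ε + Complex.I * (1 + Real.tanh β))⁻¹ *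
          Complex.exp (-(Real.pi * ‖ρ'‖ ^ 2) /
            (Real.cosh β ^ 2 * (ε + Complex.I * (1 + Real.tanh β))))) := by
  have hπ : (Real.pi : ℂ) ≠ 0 := by exact_mod_cast Real.pi_ne_zero
  have hc : (Real.cosh β : ℂ) ≠ 0 := by exact_mod_cast (Real.cosh_pos β).ne'
  have hre : 0 < ((Real.pi : ℂ) * (ε + Complex.I * (1 + (Real.tanh β : ℂ)))).re := by
    rw [Complex.re_ofReal_mul]
    have : ((ε : ℂ) + Complex.I * (1 + (Real.tanh β : ℂ))).re = ε := by
      simp [-Complex.ofReal_tanh]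
    rw [this]
    positivity
  have hb : (ε : ℂ) + Complex.I * (1 + (Real.tanh β : ℂ)) ≠ 0 := by
    intro h
    rw [h, mul_zero] at hre
    exact lt_irrefl _ hre
  have key := GaussianFourier.integral_cexp_neg_mul_sq_norm_add hre
    (2 * Real.pi * Complex.I / Real.cosh β) ρ'
  unfold fracKreg
  congr 1
  refine Eq.trans (integral_congr_ae (Eventually.of_forall fun ρ => ?_)) (key.trans ?_)
  · simp only [← Complex.exp_add]
    congr 1
    push_cast
    ring
  · generalize (ε : ℂ) + Complex.I * (1 + (Real.tanh β : ℂ)) = b at hb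
    congr 1
    · simp only [finrank_euclideanSpace, Fintype.card_fin, Nat.cast_ofNat]
      rw [div_self two_ne_zero, Complex.cpow_one]
      field_simp
    · congr 1
      field_simp
      rw [Complex.I_sq]
      ring

lemma one_add_tanh_ne_zero (β : ℝ) : 1 + Real.tanh β ≠ 0 := by
  linarith [Real.neg_one_lt_tanh β]

/-- The unregularized value of the closed form in `fracKreg_chirp`. -/
lemma chirp_closed_form_at_zero (β : ℝ) (r : ℂ) :
    Complex.I * Real.exp β / Real.cosh β *
        Complex.exp (Complex.I * Real.pi * r ^ 2 * Real.tanh β) *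
        ((((0 : ℝ) : ℂ) + Complex.I * (1 + Real.tanh β))⁻¹ *
          Complex.exp (-(Real.pi * r ^ 2) /
            (Real.cosh β ^ 2 * (((0 : ℝ) : ℂ) + Complex.I * (1 + Real.tanh β))))) =
      Complex.exp (Complex.I * Real.pi * r ^ 2) := by
  have hc : (Real.cosh β : ℂ) ≠ 0 := by exact_mod_cast (Real.cosh_pos β).ne'
  have ht : (1 + Real.tanh β : ℂ) ≠ 0 := by exact_mod_cast one_add_tanh_ne_zero β
  have hexp : (Real.exp β : ℂ) = Real.cosh β * (1 + Real.tanh β) := by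
    rw [← Real.cosh_add_sinh, Real.tanh_eq_sinh_div_cosh]
    push_cast at hc ⊢
    field_simp
  have hsq : (Real.cosh β : ℂ) ^ 2 * (1 + Real.tanh β) * (1 - Real.tanh β) = 1 := by
    have := Real.cosh_sq_sub_sinh_sq β
    have hc' := (Real.cosh_pos β).ne'
    rw [Real.tanh_eq_sinh_div_cosh]
    norm_cast
    field_simp
    linarith
  rw [hexp, Complex.ofReal_zero, zero_add]
  generalize (Real.tanh β : ℂ) = t at *
  generalize (Real.cosh β : ℂ) = c at *
  have hphase : -(Real.pi * r ^ 2) / (c ^ 2 * (Complex.I * (1 + t))) =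
      Complex.I * Real.pi * r ^ 2 * (1 - t) := by
    rw [div_eq_iff (by simp [hc, ht])]
    linear_combination (-(Real.pi * r ^ 2) * Complex.I ^ 2) * hsq - Real.pi * r ^ 2 * Complex.I_sq
  have hprefactor : Complex.I * (c * (1 + t)) / c * (Complex.I * (1 + t))⁻¹ = 1 := by
    field_simp
  rw [hphase, mul_mul_mul_comm, hprefactor, one_mul, ← Complex.exp_add]
  congr 1
  ring

/-- `K_β[g] = h` (Gaussian-regularized), where `g(ρ) = exp(−iπ‖ρ‖²)` and
`h(ρ) = exp(iπ‖ρ‖²)`. -/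
theorem stmt4 (β : ℝ)
    (g h : Plane → ℂ)
    (hg : ∀ ρ, g ρ = Complex.exp (-(Complex.I * Real.pi * ‖ρ‖ ^ 2)))
    (hh : ∀ ρ, h ρ = Complex.exp (Complex.I * Real.pi * ‖ρ‖ ^ 2))
    (ρ' : Plane) :
    Tendsto (fun ε : ℝ => fracKreg β ε g ρ')
      (nhdsWithin 0 (Set.Ioi 0)) (nhds (h ρ')) := by
  obtain rfl : g = _ := funext hg
  have ht : (1 + Real.tanh β : ℂ) ≠ 0 := by exact_mod_cast one_add_tanh_ne_zero β
  have hc : (Real.cosh β : ℂ) ≠ 0 := by exact_mod_cast (Real.cosh_pos β).ne'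
  rw [hh, ← chirp_closed_form_at_zero β]
  refine Tendsto.congr' (eventually_mem_nhdsWithin.mono fun ε hε => (fracKreg_chirp β hε ρ').symm) ?_
  refine Tendsto.mono_left ?_ nhdsWithin_le_nhds
  have hb : Tendsto (fun ε : ℝ => (ε : ℂ) + Complex.I * (1 + Real.tanh β)) (nhds 0)
      (nhds (((0 : ℝ) : ℂ) + Complex.I * (1 + Real.tanh β))) :=
    (Complex.continuous_ofReal.tendsto 0).add_const _
  have hb0 : ((0 : ℝ) : ℂ) + Complex.I * (1 + Real.tanh β) ≠ 0 := by
    rw [Complex.ofReal_zero, zero_add]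
    exact mul_ne_zero Complex.I_ne_zero ht
  exact ((hb.inv₀ hb0).mul ((tendsto_const_nhds.div (hb.const_mul _)
    (mul_ne_zero (pow_ne_zero 2 hc) hb0)).cexp)).const_mul _

end
end

section
/- Let β be a real number and let g, h : ℝ² → ℂ be the functions g(ρ) = exp(−iπ‖ρ‖²) and h(ρ) = exp(iπ‖ρ‖²). Then for every ρ' ∈ ℝ², the Gaussian-regularized value of K_β[h](ρ') equals −e^{2β}·g(ρ'); that is, the limit as ε → 0⁺ of (i·e^β/cosh β)·exp(iπ‖ρ'‖²·tanh β)·∫_{ℝ²} exp(−πε‖ρ‖²)·exp(−iπ‖ρ‖²·tanh β)·exp(2πi(ρ'⋅ρ)/cosh β)·exp(iπ‖ρ‖²) dρ is −e^{2β}·exp(−iπ‖ρ'‖²). -/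
open MeasureTheory Filter
open scoped RealInnerProductSpace

noncomputable section

/-- The regularized transform of `exp (iπ‖ρ‖²)` in closed form. -/
theorem fracKreg_cexp_I_mul_sq_norm (β : ℝ) {ε : ℝ} (hε : 0 < ε) (ρ' : Plane) :
    fracKreg β ε (fun ρ => Complex.exp (Complex.I * Real.pi * ‖ρ‖ ^ 2)) ρ' =
      Complex.I * Real.exp β / Real.cosh β *
        Complex.exp (Complex.I * Real.pi * ‖ρ'‖ ^ 2 * Real.tanh β) *
        ((ε - Complex.I * (1 - Real.tanh β))⁻¹ *
          Complex.exp (-(Real.pi * ‖ρ'‖ ^ 2 *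
            ((Real.cosh β : ℂ) ^ 2)⁻¹ * (ε - Complex.I * (1 - Real.tanh β))⁻¹))) := by
  have hπ : (Real.pi : ℂ) ≠ 0 := by exact_mod_cast Real.pi_ne_zero
  have hc : (Real.cosh β : ℂ) ≠ 0 := by exact_mod_cast (Real.cosh_pos β).ne'
  have hre : ((ε : ℂ) - Complex.I * (1 - Real.tanh β)).re = ε := by
    simp [-Complex.ofReal_tanh]
  have hne : (ε : ℂ) - Complex.I * (1 - Real.tanh β) ≠ 0 := fun h0 => by
    rw [h0] at hre
    exact hε.ne hre
  have hb : 0 < (Real.pi * ((ε : ℂ) - Complex.I * (1 - Real.tanh β))).re := by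
    rw [Complex.re_ofReal_mul, hre]
    positivity
  have key := GaussianFourier.integral_cexp_neg_mul_sq_norm_add hb
    (2 * Real.pi * Complex.I / Real.cosh β) ρ'
  unfold fracKreg
  congr 1
  convert key using 1
  · refine integral_congr_ae (Eventually.of_forall fun ρ => ?_)
    simp only [← Complex.exp_add]
    congr 1
    push_cast
    ring
  · congr 1
    · simp only [finrank_euclideanSpace, Fintype.card_fin, Nat.cast_ofNat]
      rw [div_self (two_ne_zero : (2 : ℂ) ≠ 0), Complex.cpow_one]
      field_simp
    · congr 1
      simp only [div_pow, mul_pow, Complex.I_sq]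
      field_simp
      ring

/-- `K_β[h] = −e^(2β)·g` (Gaussian-regularized), where `g(ρ) = exp(−iπ‖ρ‖²)` and
`h(ρ) = exp(iπ‖ρ‖²)`. -/
theorem stmt5 (β : ℝ)
    (g h : Plane → ℂ)
    (hg : ∀ ρ, g ρ = Complex.exp (-(Complex.I * Real.pi * ‖ρ‖ ^ 2)))
    (hh : ∀ ρ, h ρ = Complex.exp (Complex.I * Real.pi * ‖ρ‖ ^ 2))
    (ρ' : Plane) :
    Tendsto (fun ε : ℝ => fracKreg β ε h ρ')
      (nhdsWithin 0 (Set.Ioi 0)) (nhds (-(Real.exp (2 * β)) * g ρ')) := by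
  obtain rfl : h = fun ρ => Complex.exp (Complex.I * Real.pi * ‖ρ‖ ^ 2) := funext hh
  have hc : (Real.cosh β : ℂ) ≠ 0 := by exact_mod_cast (Real.cosh_pos β).ne'
  have hexp : Real.exp β * (Real.cosh β - Real.sinh β) = 1 := by
    rw [Real.cosh_sub_sinh, ← Real.exp_add, add_neg_cancel, Real.exp_zero]
  have hexp' : (Real.exp β : ℂ) * (Real.cosh β - Real.sinh β) = 1 := by exact_mod_cast hexp
  have ht : (Real.tanh β : ℂ) = Real.sinh β / Real.cosh β := by
    exact_mod_cast Real.tanh_eq_sinh_div_cosh β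
  have hinv : ((0 : ℝ) - Complex.I * (1 - Real.tanh β) : ℂ)⁻¹ =
      Complex.I * Real.cosh β * Real.exp β := by
    refine inv_eq_of_mul_eq_one_right ?_
    rw [ht, Complex.ofReal_zero]
    field_simp
    linear_combination (-(Real.exp β : ℂ) * (Real.cosh β - Real.sinh β)) * Complex.I_sq + hexp'
  have hne : ((0 : ℝ) - Complex.I * (1 - Real.tanh β) : ℂ) ≠ 0 := by
    rw [ne_eq, ← inv_eq_zero, hinv]
    exact mul_ne_zero (mul_ne_zero Complex.I_ne_zero hc) (left_ne_zero_of_mul_eq_one hexp')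
  have hlim : Tendsto (fun ε : ℝ => ((ε : ℂ) - Complex.I * (1 - Real.tanh β))⁻¹)
      (nhdsWithin 0 (Set.Ioi 0)) (nhds (Complex.I * Real.cosh β * Real.exp β)) := by
    rw [← hinv]
    refine Tendsto.inv₀ (Tendsto.mono_left ?_ nhdsWithin_le_nhds) hne
    exact (Complex.continuous_ofReal.tendsto 0).sub_const _
  have hval : -(Real.exp (2 * β) : ℂ) * g ρ' =
      Complex.I * Real.exp β / Real.cosh β *
        Complex.exp (Complex.I * Real.pi * ‖ρ'‖ ^ 2 * Real.tanh β) *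
        (Complex.I * Real.cosh β * Real.exp β *
          Complex.exp (-(Real.pi * ‖ρ'‖ ^ 2 * ((Real.cosh β : ℂ) ^ 2)⁻¹ *
            (Complex.I * Real.cosh β * Real.exp β)))) := by
    have he : (Real.exp β : ℂ) = Real.cosh β + Real.sinh β := by
      exact_mod_cast (Real.cosh_add_sinh β).symm
    have hphase : Complex.exp (-(Complex.I * Real.pi * ‖ρ'‖ ^ 2)) =
        Complex.exp (Complex.I * Real.pi * ‖ρ'‖ ^ 2 * Real.tanh β) *
          Complex.exp (-(Real.pi * ‖ρ'‖ ^ 2 * ((Real.cosh β : ℂ) ^ 2)⁻¹ *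
            (Complex.I * Real.cosh β * Real.exp β))) := by
      rw [← Complex.exp_add, ht, he]
      congr 1
      field_simp
      ring
    have hdouble : (Real.exp (2 * β) : ℂ) = Real.exp β * Real.exp β := by
      rw [two_mul, Real.exp_add, Complex.ofReal_mul]
    have hcoef : -(Real.exp β * Real.exp β : ℂ) =
        Complex.I * Real.exp β / Real.cosh β * (Complex.I * Real.cosh β * Real.exp β) := by
      field_simp
      rw [Complex.I_sq]
    rw [hg, hphase, hdouble, hcoef]
    ring
  rw [hval]
  refine Tendsto.congr' (eventually_nhdsWithin_of_forall fun ε hε =>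
    (fracKreg_cexp_I_mul_sq_norm β hε ρ').symm) ?_
  exact tendsto_const_nhds.mul (hlim.mul (hlim.const_mul _).neg.cexp)

end
end

section
/- Let β be a real number and let f₋ : ℝ² → ℂ be the function f₋(ρ) = (1−i)·e^{β/2}·exp(−iπ‖ρ‖²) + (1+i)·e^{−β/2}·exp(iπ‖ρ‖²). Then for every ρ' ∈ ℝ², the Gaussian-regularized value of K_β[f₋](ρ') equals −i·e^β·f₋(ρ'). In other words, f₋ is an eigenfunction of the hyperbolic fractional Fourier transformation of the second kind K_β with eigenvalue −i·e^β. -/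
open MeasureTheory Filter
open scoped RealInnerProductSpace

noncomputable section

/-- The integral of the regularized kernel against the chirp `exp (-iπs‖ρ‖²)` converges absolutely
and has a closed form. -/
lemma integral_chirp (β ε s : ℝ) (hε : 0 < ε) (ρ' : Plane) :
    Integrable (fun ρ : Plane =>
      Complex.exp (-(Real.pi * ε * ‖ρ‖ ^ 2 : ℝ)) *
      Complex.exp (-(Complex.I * Real.pi * ‖ρ‖ ^ 2 * Real.tanh β)) *
      Complex.exp (2 * Real.pi * Complex.I * ⟪ρ', ρ⟫ / Real.cosh β) *
      Complex.exp (-(Complex.I * Real.pi * s * ‖ρ‖ ^ 2))) ∧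
    ∫ ρ : Plane,
      Complex.exp (-(Real.pi * ε * ‖ρ‖ ^ 2 : ℝ)) *
      Complex.exp (-(Complex.I * Real.pi * ‖ρ‖ ^ 2 * Real.tanh β)) *
      Complex.exp (2 * Real.pi * Complex.I * ⟪ρ', ρ⟫ / Real.cosh β) *
      Complex.exp (-(Complex.I * Real.pi * s * ‖ρ‖ ^ 2)) =
    1 / (ε + Complex.I * (Real.tanh β + s)) *
      Complex.exp (-(Real.pi * ‖ρ'‖ ^ 2 / Real.cosh β ^ 2) /
        (ε + Complex.I * (Real.tanh β + s))) := by
  set z : ℂ := ε + Complex.I * (Real.tanh β + s) with hz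
  have hzre : z.re = ε := by
    rw [hz, ← Complex.ofReal_add, Complex.add_re, Complex.re_mul_ofReal]
    simp
  have hz0 : z ≠ 0 := fun h => by
    rw [h, Complex.zero_re] at hzre
    exact hε.ne hzre
  have hπ : (Real.pi : ℂ) ≠ 0 := Complex.ofReal_ne_zero.mpr Real.pi_ne_zero
  have hc : (Real.cosh β : ℂ) ≠ 0 := Complex.ofReal_ne_zero.mpr (Real.cosh_pos β).ne'
  have hb : 0 < ((Real.pi : ℂ) * z).re := by
    rw [Complex.re_ofReal_mul, hzre]
    exact mul_pos Real.pi_pos hε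
  have hfun : (fun ρ : Plane =>
      Complex.exp (-(Real.pi * ε * ‖ρ‖ ^ 2 : ℝ)) *
      Complex.exp (-(Complex.I * Real.pi * ‖ρ‖ ^ 2 * Real.tanh β)) *
      Complex.exp (2 * Real.pi * Complex.I * ⟪ρ', ρ⟫ / Real.cosh β) *
      Complex.exp (-(Complex.I * Real.pi * s * ‖ρ‖ ^ 2))) =
      fun ρ : Plane => Complex.exp (-(Real.pi * z) * ‖ρ‖ ^ 2 +
        2 * Real.pi * Complex.I / Real.cosh β * ⟪ρ', ρ⟫) := by
    funext ρ
    rw [← Complex.exp_add, ← Complex.exp_add, ← Complex.exp_add, hz]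
    congr 1
    push_cast
    ring
  rw [hfun]
  refine ⟨GaussianFourier.integrable_cexp_neg_mul_sq_norm_add hb _ ρ', ?_⟩
  rw [GaussianFourier.integral_cexp_neg_mul_sq_norm_add hb]
  have hdim : ((Module.finrank ℝ Plane : ℕ) / 2 : ℂ) = 1 := by
    simp [Plane]
  rw [hdim, Complex.cpow_one]
  congr 1
  · field_simp
  · congr 1
    field_simp
    rw [Complex.I_sq]
    ring

/-- The limit of the regularized integral of the chirp `exp (-iπs‖ρ‖²)`, where `s = ±1`. -/
lemma tendsto_integral_chirp (β s : ℝ) (hs : s ^ 2 = 1) (ρ' : Plane) :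
    Tendsto (fun ε : ℝ => ∫ ρ : Plane,
      Complex.exp (-(Real.pi * ε * ‖ρ‖ ^ 2 : ℝ)) *
      Complex.exp (-(Complex.I * Real.pi * ‖ρ‖ ^ 2 * Real.tanh β)) *
      Complex.exp (2 * Real.pi * Complex.I * ⟪ρ', ρ⟫ / Real.cosh β) *
      Complex.exp (-(Complex.I * Real.pi * s * ‖ρ‖ ^ 2)))
      (nhdsWithin 0 (Set.Ioi 0))
      (nhds (-Complex.I / (Real.tanh β + s) *
        Complex.exp (Complex.I * Real.pi * ‖ρ'‖ ^ 2 * (s - Real.tanh β)))) := by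
  have hc : Real.cosh β ≠ 0 := (Real.cosh_pos β).ne'
  have hsq : (Real.tanh β + s) * (s - Real.tanh β) = 1 / Real.cosh β ^ 2 := by
    rw [Real.tanh_eq_sinh_div_cosh]
    field_simp
    linear_combination Real.cosh β ^ 2 * hs + Real.cosh_sq β
  have hts : Real.tanh β + s ≠ 0 := fun h => by
    rw [h, zero_mul] at hsq
    exact (one_div_ne_zero (pow_ne_zero 2 hc)) hsq.symm
  have hts' : (Real.tanh β + s : ℂ) ≠ 0 := by exact_mod_cast hts
  have hsq' : ((Real.tanh β : ℂ) + s) * (s - Real.tanh β) = 1 / (Real.cosh β : ℂ) ^ 2 := by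
    exact_mod_cast hsq
  have hlim : Tendsto (fun ε : ℝ => (1 : ℂ) / (ε + Complex.I * (Real.tanh β + s)) *
      Complex.exp (-(Real.pi * ‖ρ'‖ ^ 2 / Real.cosh β ^ 2) /
        (ε + Complex.I * (Real.tanh β + s)))) (nhdsWithin 0 (Set.Ioi 0))
      (nhds (1 / ((0 : ℝ) + Complex.I * (Real.tanh β + s)) *
      Complex.exp (-(Real.pi * ‖ρ'‖ ^ 2 / Real.cosh β ^ 2) /
        ((0 : ℝ) + Complex.I * (Real.tanh β + s))))) := by
    have hden : ((0 : ℝ) : ℂ) + Complex.I * (Real.tanh β + s) ≠ 0 := by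
      rw [Complex.ofReal_zero, zero_add]
      exact mul_ne_zero Complex.I_ne_zero hts'
    have hcd : ContinuousAt (fun ε : ℝ => (ε : ℂ) + Complex.I * (Real.tanh β + s)) 0 := by
      fun_prop
    exact ((continuousAt_const.div hcd hden).mul
      (continuousAt_const.div hcd hden).cexp).tendsto.mono_left nhdsWithin_le_nhds
  have hval : (1 : ℂ) / ((0 : ℝ) + Complex.I * (Real.tanh β + s)) *
      Complex.exp (-(Real.pi * ‖ρ'‖ ^ 2 / Real.cosh β ^ 2) /
        ((0 : ℝ) + Complex.I * (Real.tanh β + s))) =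
      -Complex.I / (Real.tanh β + s) *
        Complex.exp (Complex.I * Real.pi * ‖ρ'‖ ^ 2 * (s - Real.tanh β)) := by
    rw [Complex.ofReal_zero, zero_add]
    congr 1
    · rw [div_eq_div_iff (mul_ne_zero Complex.I_ne_zero hts') hts']
      linear_combination ((Real.tanh β : ℂ) + s) * Complex.I_sq
    · congr 1
      rw [div_eq_iff (mul_ne_zero Complex.I_ne_zero hts'), div_eq_mul_one_div, ← hsq']
      linear_combination -((Real.pi : ℂ) * ‖ρ'‖ ^ 2 *
        (((Real.tanh β : ℂ) + s) * (s - Real.tanh β))) * Complex.I_sq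
  rw [← hval]
  refine hlim.congr' ?_
  filter_upwards [self_mem_nhdsWithin] with ε hε
  exact (integral_chirp β ε s hε ρ').2.symm

/-- `f₋ = (1−i)e^(β/2)·g + (1+i)e^(−β/2)·h` is an eigenfunction of `K_β`
(Gaussian-regularized) with eigenvalue `−i·e^β`. -/
theorem stmt6 (β : ℝ)
    (fm : Plane → ℂ)
    (hfm : ∀ ρ, fm ρ =
      (1 - Complex.I) * Real.exp (β / 2) * Complex.exp (-(Complex.I * Real.pi * ‖ρ‖ ^ 2)) +
      (1 + Complex.I) * Real.exp (-β / 2) * Complex.exp (Complex.I * Real.pi * ‖ρ‖ ^ 2))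
    (ρ' : Plane) :
    Tendsto (fun ε : ℝ => fracKreg β ε fm ρ')
      (nhdsWithin 0 (Set.Ioi 0)) (nhds (-Complex.I * Real.exp β * fm ρ')) := by
  set A : ℂ := (1 - Complex.I) * Real.exp (β / 2) with hA
  set B : ℂ := (1 + Complex.I) * Real.exp (-β / 2) with hB
  have hg := tendsto_integral_chirp β 1 (by norm_num) ρ'
  have hh := tendsto_integral_chirp β (-1) (by norm_num) ρ'
  have key := ((hg.const_mul A).add (hh.const_mul B)).const_mul
    (Complex.I * Real.exp β / Real.cosh β *
      Complex.exp (Complex.I * Real.pi * ‖ρ'‖ ^ 2 * Real.tanh β))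
  have hval : Complex.I * Real.exp β / Real.cosh β *
      Complex.exp (Complex.I * Real.pi * ‖ρ'‖ ^ 2 * Real.tanh β) *
      (A * (-Complex.I / (Real.tanh β + (1 : ℝ)) *
        Complex.exp (Complex.I * Real.pi * ‖ρ'‖ ^ 2 * ((1 : ℝ) - Real.tanh β))) +
      B * (-Complex.I / (Real.tanh β + (-1 : ℝ)) *
        Complex.exp (Complex.I * Real.pi * ‖ρ'‖ ^ 2 * ((-1 : ℝ) - Real.tanh β)))) =
      -Complex.I * Real.exp β * fm ρ' := by
    have hc : (Real.cosh β : ℂ) ≠ 0 := Complex.ofReal_ne_zero.mpr (Real.cosh_pos β).ne'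
    have he : (Real.exp (β / 2) : ℂ) ≠ 0 := Complex.ofReal_ne_zero.mpr (Real.exp_pos _).ne'
    have hE : (Real.exp β : ℂ) = (Real.exp (β / 2) : ℂ) ^ 2 := by
      rw [← Complex.ofReal_pow, ← Real.exp_nat_mul]
      congr 2
      push_cast
      ring
    have hN : (Real.exp (-β / 2) : ℂ) = (Real.exp (β / 2) : ℂ)⁻¹ := by
      rw [neg_div, Real.exp_neg, Complex.ofReal_inv]
    have hplus : (Real.cosh β : ℂ) * (Real.tanh β + (1 : ℝ)) = (Real.exp (β / 2) : ℂ) ^ 2 := by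
      rw [← hE, ← Real.cosh_add_sinh, Real.tanh_eq_sinh_div_cosh]
      push_cast at hc ⊢
      field_simp
      ring
    have hminus : (Real.cosh β : ℂ) * (Real.tanh β + (-1 : ℝ)) =
        -((Real.exp (β / 2) : ℂ) ^ 2)⁻¹ := by
      rw [← hE, ← Complex.ofReal_inv, ← Real.exp_neg, ← Real.cosh_sub_sinh,
        Real.tanh_eq_sinh_div_cosh]
      push_cast at hc ⊢
      field_simp
      ring
    have hexpg : Complex.exp (Complex.I * Real.pi * ‖ρ'‖ ^ 2 * Real.tanh β) *
        Complex.exp (Complex.I * Real.pi * ‖ρ'‖ ^ 2 * ((1 : ℝ) - Real.tanh β)) =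
        Complex.exp (Complex.I * Real.pi * ‖ρ'‖ ^ 2) := by
      rw [← Complex.exp_add]
      congr 1
      push_cast
      ring
    have hexph : Complex.exp (Complex.I * Real.pi * ‖ρ'‖ ^ 2 * Real.tanh β) *
        Complex.exp (Complex.I * Real.pi * ‖ρ'‖ ^ 2 * ((-1 : ℝ) - Real.tanh β)) =
        Complex.exp (-(Complex.I * Real.pi * ‖ρ'‖ ^ 2)) := by
      rw [← Complex.exp_add]
      congr 1
      push_cast
      ring
    calc
      _ = -Complex.I ^ 2 * Real.exp β *
          (A / (Real.cosh β * (Real.tanh β + (1 : ℝ))) *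
            (Complex.exp (Complex.I * Real.pi * ‖ρ'‖ ^ 2 * Real.tanh β) *
            Complex.exp (Complex.I * Real.pi * ‖ρ'‖ ^ 2 * ((1 : ℝ) - Real.tanh β))) +
          B / (Real.cosh β * (Real.tanh β + (-1 : ℝ))) *
            (Complex.exp (Complex.I * Real.pi * ‖ρ'‖ ^ 2 * Real.tanh β) *
            Complex.exp (Complex.I * Real.pi * ‖ρ'‖ ^ 2 * ((-1 : ℝ) - Real.tanh β)))) := by
        simp only [div_eq_mul_inv, mul_inv]
        ring
      _ = _ := by
        rw [hplus, hminus, hexpg, hexph, hfm, hA, hB, hE, hN]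
        generalize (Real.exp (β / 2) : ℂ) = e at he ⊢
        generalize Complex.exp (Complex.I * Real.pi * ‖ρ'‖ ^ 2) = h
        generalize Complex.exp (-(Complex.I * Real.pi * ‖ρ'‖ ^ 2)) = g
        field_simp
        ring_nf
        simp only [Complex.I_sq]
        ring
  rw [← hval]
  refine key.congr' ?_
  filter_upwards [self_mem_nhdsWithin] with ε hε
  obtain ⟨hig, -⟩ := integral_chirp β ε 1 hε ρ'
  obtain ⟨hih, -⟩ := integral_chirp β ε (-1) hε ρ'
  rw [fracKreg, ← integral_const_mul, ← integral_const_mul,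
    ← integral_add (hig.const_mul A) (hih.const_mul B)]
  congr 1
  refine integral_congr_ae (Eventually.of_forall fun ρ => ?_)
  simp only [hfm]
  push_cast
  simp only [mul_one, mul_neg, neg_mul, neg_neg]
  ring

end
end

section
/- Let β and β' be real numbers with β ≠ β', and let f ∈ 𝓢(ℝ², ℂ). Then for every ρ'' ∈ ℝ², K_{β'}[K_β[f]](ρ'') = −e^{2β'}·H_{β−β'}[f̃](ρ''), where f̃(ρ) = f(−ρ) is the symmetrized function and the outer transformation K_{β'} is applied to the function ρ' ↦ K_β[f](ρ'). That is, K_{β'} ∘ K_β = −e^{2β'}·H_{β−β'} ∘ 𝒫, where 𝒫 is the parity operator. -/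
open MeasureTheory Filter
open scoped RealInnerProductSpace

noncomputable section

/-- Hyperbolic fractional-order Fourier transformation of the second kind of order `β`. -/
def fracK (β : ℝ) (f : Plane → ℂ) (ρ' : Plane) : ℂ :=
  Complex.I * Real.exp β / Real.cosh β *
    Complex.exp (Complex.I * Real.pi * ‖ρ'‖ ^ 2 * Real.tanh β) *
    ∫ ρ : Plane,
      Complex.exp (-(Complex.I * Real.pi * ‖ρ‖ ^ 2 * Real.tanh β)) *
      Complex.exp (2 * Real.pi * Complex.I * ⟪ρ', ρ⟫ / Real.cosh β) * f ρ

/-- The map `x ↦ e^{ix}` on the real line has temperate growth. -/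
lemma hasTemperateGrowth_cexp_mul_I :
    (fun x : ℝ => Complex.exp (x * Complex.I)).HasTemperateGrowth := by
  have hiter (n : ℕ) : iteratedDeriv n (fun x : ℝ => Complex.exp (x * Complex.I)) =
      fun x : ℝ => Complex.I ^ n * Complex.exp (x * Complex.I) := by
    induction n with
    | zero => simp
    | succ n ih =>
      rw [iteratedDeriv_succ, ih]
      funext x
      have h := (((hasDerivAt_id x).ofReal_comp.mul_const Complex.I).cexp).const_mul
        (Complex.I ^ n)
      refine (h.congr_deriv ?_).deriv
      simp only [id, Complex.ofReal_one]
      ring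
  refine ⟨?_, fun n => ⟨0, 1, fun x => ?_⟩⟩
  · exact (Complex.ofRealCLM.contDiff.mul contDiff_const).cexp
  · rw [norm_iteratedFDeriv_eq_norm_iteratedDeriv, hiter]
    simp [Complex.norm_exp_ofReal_mul_I]

/-- Multiplication of a Schwartz function by the chirp `e^{ic‖ρ‖²}` gives a Schwartz function. -/
lemma exists_schwartzMap_chirp_mul (c : ℝ) (f : SchwartzMap Plane ℂ) :
    ∃ g : SchwartzMap Plane ℂ,
      ∀ ρ, g ρ = Complex.exp ((c * ‖ρ‖ ^ 2 : ℝ) * Complex.I) * f ρ := by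
  have hchirp : (fun ρ : Plane =>
      Complex.exp ((c * ‖ρ‖ ^ 2 : ℝ) * Complex.I)).HasTemperateGrowth :=
    hasTemperateGrowth_cexp_mul_I.comp
      ((Function.HasTemperateGrowth.const c).mul (Function.hasTemperateGrowth_norm_sq Plane))
  exact ⟨SchwartzMap.smulLeftCLM ℂ _ f, fun ρ => by
    rw [SchwartzMap.smulLeftCLM_apply_apply hchirp, smul_eq_mul]⟩

/-- The rescaled Fourier transform of a Schwartz function is integrable. -/
lemma integrable_integral_cexp_inner_div (g : SchwartzMap Plane ℂ) {C : ℝ} (hC : C ≠ 0) :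
    Integrable fun x : Plane =>
      ∫ y : Plane, Complex.exp (2 * Real.pi * Complex.I * ⟪x, y⟫ / C) * g y := by
  have h : Integrable fun x : Plane => FourierTransform.fourier g ((-C⁻¹) • x) :=
    ((FourierTransform.fourier g).integrable (μ := volume)).comp_smul
      (neg_ne_zero.mpr (inv_ne_zero hC))
  refine h.congr (.of_forall fun x => ?_)
  simp only [SchwartzMap.fourier_coe, Real.fourier_eq', smul_eq_mul]
  refine integral_congr_ae (.of_forall fun y => ?_)
  simp only [inner_smul_right, real_inner_comm]
  congr 2
  push_cast
  ring

/-- Fubini's theorem for the pairing of a decaying Gaussian with a rescaled Fourier transform. -/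
lemma integral_gaussian_mul_integral_cexp_inner_div {b : ℂ} (hb : 0 < b.re) (C : ℝ)
    {g : Plane → ℂ} (hg : Integrable g) (w : Plane) :
    ∫ x : Plane, Complex.exp (-b * ‖x‖ ^ 2 + 2 * Real.pi * Complex.I * ⟪w, x⟫) *
        ∫ y : Plane, Complex.exp (2 * Real.pi * Complex.I * ⟪x, y⟫ / C) * g y =
      Real.pi / b *
        ∫ y : Plane, Complex.exp (-Real.pi ^ 2 * ‖w + C⁻¹ • y‖ ^ 2 / b) * g y := by
  have hgauss := GaussianFourier.integrable_cexp_neg_mul_sq_norm_add hb (2 * Real.pi * Complex.I) w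
  have hprod : Integrable (Function.uncurry fun x y : Plane =>
      Complex.exp (-b * ‖x‖ ^ 2 + 2 * Real.pi * Complex.I * ⟪w, x⟫) *
        (Complex.exp (2 * Real.pi * Complex.I * ⟪x, y⟫ / C) * g y)) (volume.prod volume) := by
    have hbdd := (hgauss.mul_prod hg).bdd_mul (c := 1)
      (f := fun p : Plane × Plane => Complex.exp (2 * Real.pi * Complex.I * ⟪p.1, p.2⟫ / C))
      (by fun_prop) (.of_forall fun p => by
        rw [show (2 * Real.pi * Complex.I * ⟪p.1, p.2⟫ / C : ℂ) =
          (2 * Real.pi * ⟪p.1, p.2⟫ / C : ℝ) * Complex.I by push_cast; ring,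
          Complex.norm_exp_ofReal_mul_I])
    refine hbdd.congr (.of_forall fun p => ?_)
    simp only [Function.uncurry]
    ring
  simp_rw [← integral_const_mul]
  rw [integral_integral_swap hprod]
  refine integral_congr_ae (.of_forall fun y => ?_)
  have hint := GaussianFourier.integral_cexp_neg_mul_sq_norm_add hb (2 * Real.pi * Complex.I)
    (w + C⁻¹ • y)
  rw [finrank_euclideanSpace_fin, Nat.cast_ofNat, div_self two_ne_zero, Complex.cpow_one] at hint
  have hexp : (2 * Real.pi * Complex.I) ^ 2 * (‖w + C⁻¹ • y‖ : ℂ) ^ 2 / (4 * b) =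
      -Real.pi ^ 2 * ‖w + C⁻¹ • y‖ ^ 2 / b := by
    have hb0 : b ≠ 0 := by rintro rfl; simp at hb
    rw [mul_pow, Complex.I_sq]
    field_simp
    ring
  simp only
  rw [← mul_assoc, ← hexp, ← hint, ← integral_mul_const]
  refine integral_congr_ae (.of_forall fun x => ?_)
  simp only
  rw [← mul_assoc, ← Complex.exp_add, inner_add_left, real_inner_smul_left, real_inner_comm x y]
  congr 2
  push_cast
  ring

/-- The pairing of the chirp `e^{iπs‖x‖²}` with a rescaled Fourier transform, obtained as the limit
of decaying Gaussians. -/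
lemma integral_chirp_mul_integral_cexp_inner_div {s : ℝ} (hs : s ≠ 0) (C : ℝ) {g : Plane → ℂ}
    (hg : Integrable g)
    (hG : Integrable fun x : Plane =>
      ∫ y : Plane, Complex.exp (2 * Real.pi * Complex.I * ⟪x, y⟫ / C) * g y) (w : Plane) :
    ∫ x : Plane, Complex.exp (Complex.I * Real.pi * s * ‖x‖ ^ 2 +
          2 * Real.pi * Complex.I * ⟪w, x⟫) *
        ∫ y : Plane, Complex.exp (2 * Real.pi * Complex.I * ⟪x, y⟫ / C) * g y =
      Complex.I / s *
        ∫ y : Plane, Complex.exp (-(Complex.I * Real.pi * ‖w + C⁻¹ • y‖ ^ 2 / s)) * g y := by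
  have hs' : (s : ℂ) ≠ 0 := Complex.ofReal_ne_zero.mpr hs
  have hpi : (Real.pi : ℂ) ≠ 0 := Complex.ofReal_ne_zero.mpr Real.pi_ne_zero
  have hre (ε : ℝ) : ((ε : ℂ) - Complex.I * Real.pi * s).re = ε := by simp
  have hb0 : ((0 : ℝ) : ℂ) - Complex.I * Real.pi * s ≠ 0 := by simp [hs, Real.pi_ne_zero]
  have hb : Tendsto (fun ε : ℝ => (ε : ℂ) - Complex.I * Real.pi * s) (nhdsWithin 0 (Set.Ioi 0))
      (nhds (((0 : ℝ) : ℂ) - Complex.I * Real.pi * s)) :=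
    ((Complex.continuous_ofReal.sub continuous_const).tendsto 0).mono_left nhdsWithin_le_nhds
  have hleft : Tendsto (fun ε : ℝ => ∫ x : Plane,
      Complex.exp (-((ε : ℂ) - Complex.I * Real.pi * s) * ‖x‖ ^ 2 +
          2 * Real.pi * Complex.I * ⟪w, x⟫) *
        ∫ y : Plane, Complex.exp (2 * Real.pi * Complex.I * ⟪x, y⟫ / C) * g y)
      (nhdsWithin 0 (Set.Ioi 0))
      (nhds (∫ x : Plane, Complex.exp (-(((0 : ℝ) : ℂ) - Complex.I * Real.pi * s) * ‖x‖ ^ 2 +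
          2 * Real.pi * Complex.I * ⟪w, x⟫) *
        ∫ y : Plane, Complex.exp (2 * Real.pi * Complex.I * ⟪x, y⟫ / C) * g y)) := by
    refine tendsto_integral_filter_of_dominated_convergence _ (.of_forall fun ε => ?_) ?_ hG.norm
      (.of_forall fun x => ?_)
    · exact (Continuous.aestronglyMeasurable (by fun_prop)).mul hG.aestronglyMeasurable
    · filter_upwards [self_mem_nhdsWithin] with ε hε
      refine .of_forall fun x => ?_
      rw [norm_mul]
      refine mul_le_of_le_one_left (norm_nonneg _) ?_
      rw [Complex.norm_exp, Real.exp_le_one_iff]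
      have hε' : 0 ≤ ε * ‖x‖ ^ 2 := mul_nonneg (le_of_lt hε) (by positivity)
      simpa [← Complex.ofReal_pow] using hε'
    · exact (((hb.neg.mul_const _).add_const _).cexp).mul_const _
  have hright : Tendsto (fun ε : ℝ => Real.pi / ((ε : ℂ) - Complex.I * Real.pi * s) *
      ∫ y : Plane, Complex.exp
        (-Real.pi ^ 2 * ‖w + C⁻¹ • y‖ ^ 2 / ((ε : ℂ) - Complex.I * Real.pi * s)) * g y)
      (nhdsWithin 0 (Set.Ioi 0))
      (nhds (Real.pi / (((0 : ℝ) : ℂ) - Complex.I * Real.pi * s) *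
        ∫ y : Plane, Complex.exp
          (-Real.pi ^ 2 * ‖w + C⁻¹ • y‖ ^ 2 / (((0 : ℝ) : ℂ) - Complex.I * Real.pi * s)) *
            g y)) := by
    refine (tendsto_const_nhds.div hb hb0).mul
      (tendsto_integral_filter_of_dominated_convergence _ (.of_forall fun ε => ?_) ?_ hg.norm
        (.of_forall fun y => ?_))
    · exact (Continuous.aestronglyMeasurable (by fun_prop)).mul hg.aestronglyMeasurable
    · filter_upwards [self_mem_nhdsWithin] with ε hε
      refine .of_forall fun y => ?_
      rw [norm_mul]
      refine mul_le_of_le_one_left (norm_nonneg _) ?_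
      rw [Complex.norm_exp, Real.exp_le_one_iff,
        show (-Real.pi ^ 2 * ‖w + C⁻¹ • y‖ ^ 2 / ((ε : ℂ) - Complex.I * Real.pi * s) : ℂ) =
          ((-(Real.pi ^ 2 * ‖w + C⁻¹ • y‖ ^ 2) : ℝ) : ℂ) *
            ((ε : ℂ) - Complex.I * Real.pi * s)⁻¹ by push_cast; ring,
        Complex.re_ofReal_mul, Complex.inv_re, hre]
      exact mul_nonpos_of_nonpos_of_nonneg (neg_nonpos.mpr (by positivity))
        (div_nonneg (le_of_lt hε) (Complex.normSq_nonneg _))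
    · exact ((tendsto_const_nhds.div hb hb0).cexp).mul_const _
  have hlim := tendsto_nhds_unique (hleft.congr' (by
    filter_upwards [self_mem_nhdsWithin] with ε hε
    exact integral_gaussian_mul_integral_cexp_inner_div (by rw [hre]; exact hε) C hg w)) hright
  have hinv : (Real.pi : ℂ) / (((0 : ℝ) : ℂ) - Complex.I * Real.pi * s) = Complex.I / s := by
    rw [Complex.ofReal_zero, zero_sub]
    field_simp
    simp
  convert hlim using 1
  · refine integral_congr_ae (.of_forall fun x => ?_)
    simp only [Complex.ofReal_zero, zero_sub, neg_neg]
  · rw [hinv]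
    congr 1
    refine integral_congr_ae (.of_forall fun y => ?_)
    simp only
    congr 2
    calc _ = -Real.pi * ‖w + C⁻¹ • y‖ ^ 2 * (Complex.I / s) := by ring
      _ = _ := by rw [← hinv]; ring

/-- Composition of two hyperbolic transformations of the second kind:
`K_{β'} ∘ K_β = −e^(2β')·H_{β−β'} ∘ 𝒫` (for `β ≠ β'`), where `𝒫` is the parity operator. -/
theorem stmt8 (β β' : ℝ) (hne : β ≠ β')
    (f : SchwartzMap Plane ℂ) (ρ'' : Plane) :
    fracK β' (fun ρ' => fracK β (⇑f) ρ') ρ'' =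
      -(Real.exp (2 * β')) * fracH (β - β') (fun ρ => f (-ρ)) ρ'' := by
  have hC : Real.cosh β ≠ 0 := (Real.cosh_pos β).ne'
  have hC' : Real.cosh β' ≠ 0 := (Real.cosh_pos β').ne'
  have hS : Real.sinh (β - β') ≠ 0 := by simpa [sub_eq_zero] using hne
  have htanh : Real.tanh β - Real.tanh β' =
      Real.sinh (β - β') / (Real.cosh β * Real.cosh β') := by
    rw [Real.tanh_eq_sinh_div_cosh, Real.tanh_eq_sinh_div_cosh, Real.sinh_sub]
    field_simp
  have hs : Real.tanh β - Real.tanh β' ≠ 0 := by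
    rw [htanh]; exact div_ne_zero hS (mul_ne_zero hC hC')
  obtain ⟨g, hg⟩ := exists_schwartzMap_chirp_mul (-(Real.pi * Real.tanh β)) f
  have hpair := integral_chirp_mul_integral_cexp_inner_div hs (Real.cosh β) g.integrable
    (integrable_integral_cexp_inner_div g hC) ((Real.cosh β')⁻¹ • ρ'')
  have hK (ρ' : Plane) : fracK β f ρ' = Complex.I * Real.exp β / Real.cosh β *
      Complex.exp (Complex.I * Real.pi * ‖ρ'‖ ^ 2 * Real.tanh β) *
      ∫ y : Plane, Complex.exp (2 * Real.pi * Complex.I * ⟪ρ', y⟫ / Real.cosh β) * g y := by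
    rw [fracK]
    congr 1
    refine integral_congr_ae (.of_forall fun y => ?_)
    simp only [hg]
    rw [show (-(Complex.I * Real.pi * ‖y‖ ^ 2 * Real.tanh β) : ℂ) =
      (-(Real.pi * Real.tanh β) * ‖y‖ ^ 2 : ℝ) * Complex.I by push_cast; ring]
    ring
  have hKK : ∫ ρ' : Plane, Complex.exp (-(Complex.I * Real.pi * ‖ρ'‖ ^ 2 * Real.tanh β')) *
      Complex.exp (2 * Real.pi * Complex.I * ⟪ρ'', ρ'⟫ / Real.cosh β') * fracK β f ρ' =
      Complex.I * Real.exp β / Real.cosh β * (Complex.I / (Real.tanh β - Real.tanh β' : ℝ) *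
        ∫ y : Plane, Complex.exp (-(Complex.I * Real.pi *
          ‖(Real.cosh β')⁻¹ • ρ'' + (Real.cosh β)⁻¹ • y‖ ^ 2 /
            (Real.tanh β - Real.tanh β' : ℝ))) * g y) := by
    rw [← hpair, ← integral_const_mul]
    refine integral_congr_ae (.of_forall fun ρ' => ?_)
    simp only [hK]
    rw [show (Complex.I * Real.pi * (Real.tanh β - Real.tanh β' : ℝ) * ‖ρ'‖ ^ 2 +
        2 * Real.pi * Complex.I * ⟪(Real.cosh β')⁻¹ • ρ'', ρ'⟫ : ℂ) =
        -(Complex.I * Real.pi * ‖ρ'‖ ^ 2 * Real.tanh β') +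
        2 * Real.pi * Complex.I * ⟪ρ'', ρ'⟫ / Real.cosh β' +
        Complex.I * Real.pi * ‖ρ'‖ ^ 2 * Real.tanh β by
          rw [real_inner_smul_left]; push_cast; ring, Complex.exp_add, Complex.exp_add]
    ring
  have hphase (y : Plane) : Real.tanh β' * ‖ρ''‖ ^ 2 -
      ‖(Real.cosh β')⁻¹ • ρ'' + (Real.cosh β)⁻¹ • y‖ ^ 2 / (Real.tanh β - Real.tanh β') -
      Real.tanh β * ‖y‖ ^ 2 =
      -(‖ρ''‖ ^ 2 * (Real.cosh (β - β') / Real.sinh (β - β'))) -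
      ‖y‖ ^ 2 * (Real.cosh (β - β') / Real.sinh (β - β')) -
      2 * ⟪ρ'', y⟫ / Real.sinh (β - β') := by
    have hcosh : Real.cosh (β - β') * Real.cosh β' =
        Real.cosh β - Real.sinh β' * Real.sinh (β - β') := by
      rw [Real.cosh_sub, Real.sinh_sub]
      linear_combination Real.cosh β * Real.cosh_sq β'
    have hcosh' : Real.cosh (β - β') * Real.cosh β =
        Real.cosh β' + Real.sinh β * Real.sinh (β - β') := by
      rw [Real.cosh_sub, Real.sinh_sub]
      linear_combination Real.cosh β' * Real.cosh_sq β
    rw [htanh, norm_add_sq_real, norm_smul, norm_smul, mul_pow, mul_pow, real_inner_smul_left,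
      real_inner_smul_right, Real.tanh_eq_sinh_div_cosh, Real.tanh_eq_sinh_div_cosh]
    simp only [norm_inv, Real.norm_eq_abs, inv_pow, sq_abs]
    field_simp
    linear_combination ‖ρ''‖ ^ 2 * Real.cosh β * hcosh + ‖y‖ ^ 2 * Real.cosh β' * hcosh'
  have hconst : Complex.I * Real.exp β' / Real.cosh β' * (Complex.I * Real.exp β / Real.cosh β *
      (Complex.I / (Real.tanh β - Real.tanh β' : ℝ))) =
      -(Real.exp (2 * β')) * (Complex.I * Real.exp (β - β') / Real.sinh (β - β')) := by
    have hexp : Real.exp (2 * β') * Real.exp (β - β') = Real.exp β' * Real.exp β := by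
      rw [← Real.exp_add, ← Real.exp_add]; ring_nf
    have hexp' : (Real.exp (2 * β') : ℂ) * Real.exp (β - β') = Real.exp β' * Real.exp β :=
      mod_cast hexp
    have h₁ : (Real.cosh β : ℂ) ≠ 0 := Complex.ofReal_ne_zero.mpr hC
    have h₂ : (Real.cosh β' : ℂ) ≠ 0 := Complex.ofReal_ne_zero.mpr hC'
    have h₃ : (Real.sinh (β - β') : ℂ) ≠ 0 := Complex.ofReal_ne_zero.mpr hS
    rw [htanh, Complex.ofReal_div, Complex.ofReal_mul]
    generalize (Real.cosh β : ℂ) = c, (Real.cosh β' : ℂ) = c', (Real.sinh (β - β') : ℂ) = d at *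
    field_simp
    rw [Complex.I_sq]
    linear_combination hexp'
  have hreflect := integral_neg_eq_self (fun y : Plane =>
    Complex.exp (-(Complex.I * Real.pi * ‖y‖ ^ 2 *
      (Real.cosh (β - β') / Real.sinh (β - β')))) *
    Complex.exp (2 * Real.pi * Complex.I * ⟪ρ'', y⟫ / Real.sinh (β - β')) * f (-y)) volume
  rw [fracK, hKK, fracH, ← hreflect]
  calc _ = Complex.I * Real.exp β' / Real.cosh β' * (Complex.I * Real.exp β / Real.cosh β *
      (Complex.I / (Real.tanh β - Real.tanh β' : ℝ))) *
        (Complex.exp (Complex.I * Real.pi * ‖ρ''‖ ^ 2 * Real.tanh β') *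
        ∫ y : Plane, Complex.exp (-(Complex.I * Real.pi *
          ‖(Real.cosh β')⁻¹ • ρ'' + (Real.cosh β)⁻¹ • y‖ ^ 2 /
            (Real.tanh β - Real.tanh β' : ℝ))) * g y) := by ring
    _ = _ := by
      rw [hconst, ← mul_assoc, mul_assoc, mul_assoc (-(Real.exp (2 * β') : ℂ)), mul_assoc,
        mul_assoc, mul_assoc]
      congr 2
      rw [← integral_const_mul, ← integral_const_mul]
      refine integral_congr_ae (.of_forall fun y => ?_)
      simp only [hg, neg_neg, norm_neg, inner_neg_right]
      simp only [← mul_assoc, ← Complex.exp_add]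
      congr 2
      have h := congrArg (fun r : ℝ => Complex.I * Real.pi * (r : ℂ)) (hphase y)
      push_cast at h ⊢
      linear_combination h

end
end

section
/- Let β be a real number and let f ∈ 𝓢(ℝ², ℂ). Then for every ρ'' ∈ ℝ², K_β[K_β[f]](ρ'') = −e^{2β}·f(−ρ''), where the outer transformation K_β is applied to the function ρ' ↦ K_β[f](ρ'). That is, K_β ∘ K_β = −e^{2β}·𝒫, where 𝒫 is the parity operator. -/
open MeasureTheory Filter
open scoped RealInnerProductSpace

noncomputable section

open scoped FourierTransform

/-- The imaginary exponential `x ↦ exp (i x)` has temperate growth. -/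
lemma hasTemperateGrowth_cexp_I_mul :
    (fun x : ℝ => Complex.exp (Complex.I * x)).HasTemperateGrowth := by
  have hderiv (n : ℕ) : iteratedDeriv n (fun x : ℝ => Complex.exp (Complex.I * x)) =
      fun x : ℝ => Complex.I ^ n * Complex.exp (Complex.I * x) := by
    induction n with
    | zero => simp
    | succ n ih =>
      rw [iteratedDeriv_succ, ih]
      funext x
      have h := (((Complex.ofRealCLM.hasDerivAt (x := x)).const_mul Complex.I).cexp).const_mul
        (Complex.I ^ n)
      simp only [Complex.ofRealCLM_apply] at h
      rw [h.deriv]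
      push_cast
      ring
  refine ⟨(contDiff_const.mul Complex.ofRealCLM.contDiff).cexp, fun n => ⟨0, 1, fun x => ?_⟩⟩
  rw [norm_iteratedFDeriv_eq_norm_iteratedDeriv, hderiv]
  simp [Complex.norm_exp]

/-- The quadratic phase factor `ρ ↦ exp (-iπ t ‖ρ‖²)` has temperate growth. -/
lemma hasTemperateGrowth_chirp_s9 (t : ℝ) :
    (fun ρ : Plane =>
      Complex.exp (-(Complex.I * Real.pi * ‖ρ‖ ^ 2 * t))).HasTemperateGrowth := by
  have hphase : (fun ρ : Plane => -(Real.pi * t) * ‖ρ‖ ^ 2).HasTemperateGrowth :=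
    (Function.HasTemperateGrowth.const _).mul (Function.hasTemperateGrowth_norm_sq Plane)
  convert hasTemperateGrowth_cexp_I_mul.comp hphase using 1
  funext ρ
  simp only [Function.comp_apply]
  congr 1
  push_cast
  ring

/-- `fracK β f` is a rescaled inverse Fourier transform of `f` times a quadratic phase,
multiplied by the opposite quadratic phase. -/
lemma fracK_eq_fourierInv (β : ℝ) (f : Plane → ℂ) (ρ' : Plane) :
    fracK β f ρ' = Complex.I * Real.exp β / Real.cosh β *
      Complex.exp (Complex.I * Real.pi * ‖ρ'‖ ^ 2 * Real.tanh β) *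
      𝓕⁻ (fun ρ : Plane =>
        Complex.exp (-(Complex.I * Real.pi * ‖ρ‖ ^ 2 * Real.tanh β)) * f ρ)
        ((Real.cosh β)⁻¹ • ρ') := by
  rw [fracK, Real.fourierInv_eq']
  congr 2
  funext ρ
  rw [smul_eq_mul, mul_comm (Complex.exp _) (Complex.exp _), mul_assoc, inner_smul_right,
    real_inner_comm ρ ρ']
  congr 2
  push_cast
  ring

/-- For a Schwartz function, the inverse Fourier transform applied to a dilated inverse Fourier
transform recovers the reflected function. -/
lemma fourierInv_comp_inv_smul_fourierInv {V E : Type*} [NormedAddCommGroup V]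
    [InnerProductSpace ℝ V] [FiniteDimensional ℝ V] [MeasurableSpace V] [BorelSpace V]
    [NormedAddCommGroup E] [NormedSpace ℂ E] [CompleteSpace E]
    (g : SchwartzMap V E) (c : ℝ) (v : V) :
    𝓕⁻ (fun w : V => 𝓕⁻ (⇑g) (c⁻¹ • w)) (c⁻¹ • v) =
      |c ^ Module.finrank ℝ V| • g (-v) := by
  have hscale := Measure.integral_comp_inv_smul (volume : Measure V)
    (fun u : V => Complex.exp (↑(2 * Real.pi * ⟪u, v⟫) * Complex.I) • 𝓕⁻ (⇑g) u) c
  have hinv : 𝓕⁻ (𝓕⁻ (⇑g)) v = g (-v) := by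
    rw [Real.fourierInv_eq_fourier_neg, ← SchwartzMap.fourierInv_coe, ← SchwartzMap.fourier_coe,
      FourierTransform.fourier_fourierInv_eq]
  rw [← hinv, Real.fourierInv_eq', Real.fourierInv_eq' _ v, ← hscale]
  simp only [inner_smul_left, inner_smul_right, RCLike.conj_to_real]

/-- `K_β ∘ K_β = −e^(2β)·𝒫`, where `𝒫` is the parity operator. -/
theorem stmt9 (β : ℝ) (f : SchwartzMap Plane ℂ) (ρ'' : Plane) :
    fracK β (fun ρ' => fracK β (⇑f) ρ') ρ'' = -(Real.exp (2 * β)) * f (-ρ'') := by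
  set g : SchwartzMap Plane ℂ := SchwartzMap.smulLeftCLM ℂ
    (fun ρ : Plane => Complex.exp (-(Complex.I * Real.pi * ‖ρ‖ ^ 2 * Real.tanh β))) f
  have hg (ρ : Plane) : g ρ =
      Complex.exp (-(Complex.I * Real.pi * ‖ρ‖ ^ 2 * Real.tanh β)) * f ρ :=
    SchwartzMap.smulLeftCLM_apply_apply (hasTemperateGrowth_chirp_s9 _) f ρ
  have hcosh : (Real.cosh β : ℂ) ≠ 0 := mod_cast (Real.cosh_pos β).ne'
  have hinner (ρ : Plane) :
      Complex.exp (-(Complex.I * Real.pi * ‖ρ‖ ^ 2 * Real.tanh β)) * fracK β f ρ =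
        (Complex.I * Real.exp β / Real.cosh β) • 𝓕⁻ (⇑g) ((Real.cosh β)⁻¹ • ρ) := by
    rw [fracK_eq_fourierInv, ← funext hg, Complex.exp_neg, smul_eq_mul]
    field_simp [Complex.exp_ne_zero]
  have hsmul : 𝓕⁻ (fun ρ : Plane =>
      (Complex.I * Real.exp β / Real.cosh β) • 𝓕⁻ (⇑g) ((Real.cosh β)⁻¹ • ρ))
        ((Real.cosh β)⁻¹ • ρ'') =
      (Complex.I * Real.exp β / Real.cosh β) • ((Real.cosh β ^ 2) • g (-ρ'')) := by
    have h := fourierInv_comp_inv_smul_fourierInv g (Real.cosh β) ρ''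
    rw [finrank_euclideanSpace_fin, abs_of_nonneg (sq_nonneg _)] at h
    rw [← h, Real.fourierInv_eq', Real.fourierInv_eq', ← integral_smul]
    simp only [smul_comm (Complex.I * Real.exp β / Real.cosh β : ℂ)]
  rw [fracK_eq_fourierInv, funext hinner, hsmul, hg, norm_neg, Complex.exp_neg, two_mul,
    Real.exp_add, smul_eq_mul, Complex.real_smul]
  push_cast at hcosh ⊢
  field_simp [Complex.exp_ne_zero]
  simp [Complex.I_sq]

end
end

section
/- Let D, R_A, R_B be real numbers with D ≠ 0 and D·(D − R_A + R_B) ≠ 0, and suppose that J = (R_A − D)(R_B + D)/(D·(D − R_A + R_B)) satisfies J < −1. Then R_A·(R_A − D) and R_B·(R_B + D) are nonzero and have the same sign; equivalently, R_A·(R_A − D)·R_B·(R_B + D) > 0. -/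
/-- If the diffraction parameter `J = (R_A − D)(R_B + D)/(D(D − R_A + R_B))` satisfies
`J < −1`, then `R_A(R_A − D)` and `R_B(R_B + D)` are nonzero and have the same sign. -/
theorem stmt12 (D RA RB : ℝ) (hD : D ≠ 0) (hden : D * (D - RA + RB) ≠ 0)
    (hJ : (RA - D) * (RB + D) / (D * (D - RA + RB)) < -1) :
    RA * (RA - D) * (RB * (RB + D)) > 0 := by
  set E := D * (D - RA + RB) with hE
  have hJ_add_one : (RA - D) * (RB + D) / E + 1 = RA * RB / E := by
    rw [div_add_one hden, hE]
    ring
  have hprod : RA * (RA - D) * (RB * (RB + D)) =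
      (RA - D) * (RB + D) / E * (RA * RB / E) * E ^ 2 := by
    field_simp
  rw [hprod]
  exact mul_pos (mul_pos_of_neg_of_neg (by linarith) (by linarith)) (by positivity)
end

section
/- Let D, R_A, R_B be nonzero real numbers with D ≠ R_A, D ≠ −R_B, D·(D − R_A + R_B) ≠ 0, and suppose that J = (R_A − D)(R_B + D)/(D·(D − R_A + R_B)) satisfies J < −1. Let s ∈ {1, −1} be such that s·R_A·(R_A − D) > 0, and let β be a nonzero real number with coth²β = −J and β·D > 0. Define ε_A = s·(D/(R_A − D))·coth β and ε_B = s·(D/(R_B + D))·coth β. Then ε_A·R_A > 0 and ε_B·R_B > 0. -/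
/-- If `J < -1`, then `R_A R_B` and `(R_A - D)(R_B + D)` have the same sign, since
`J + 1 = R_A R_B / (D (D - R_A + R_B))`. -/
theorem mul_mul_pos_of_diffraction_lt_neg_one {D RA RB : ℝ} (hden : D * (D - RA + RB) ≠ 0)
    (hJ : (RA - D) * (RB + D) / (D * (D - RA + RB)) < -1) :
    0 < (RA * (RA - D)) * (RB * (RB + D)) := by
  have hJ_add_one : RA * RB / (D * (D - RA + RB)) < 0 := by
    have h : RA * RB / (D * (D - RA + RB)) =
        (RA - D) * (RB + D) / (D * (D - RA + RB)) + 1 := by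
      rw [div_add_one hden]
      ring
    linarith
  have hprod := mul_pos_of_neg_of_neg (hJ.trans neg_one_lt_zero) hJ_add_one
  rw [div_mul_div_comm] at hprod
  have := (div_pos_iff_of_pos_right (mul_self_pos.2 hden)).1 hprod
  linarith

/-- `D coth β` is positive when `β` and `D` have the same sign. -/
theorem mul_cosh_div_sinh_pos {β D : ℝ} (h : 0 < β * D) :
    0 < D * (Real.cosh β / Real.sinh β) := by
  have hcosh := Real.cosh_pos β
  rcases mul_pos_iff.1 h with ⟨hβ, hD⟩ | ⟨hβ, hD⟩
  · exact mul_pos hD (div_pos hcosh (Real.sinh_pos_iff.2 hβ))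
  · exact mul_pos_of_neg_of_neg hD (div_neg_of_pos_of_neg hcosh (Real.sinh_neg_iff.2 hβ))

/-- A quotient `x / y` may be replaced by the product `x y` when testing signs. -/
theorem mul_div_mul_mul_pos {s x y d c : ℝ} (hxy : 0 < s * (x * y)) (hdc : 0 < d * c) :
    0 < s * (d / y) * c * x := by
  have hy : y ≠ 0 := by
    rintro rfl
    simp at hxy
  have h : s * (d / y) * c * x = s * (x * y) * (d * c) / y ^ 2 := by
    field_simp
  rw [h]
  positivity

/-- Lemma 3: for `J < −1`, with `s` the sign of `R_A(R_A − D)`, `coth²β = −J` and `βD > 0`,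
the parameters `ε_A = s·(D/(R_A − D))·coth β` and `ε_B = s·(D/(R_B + D))·coth β` satisfy
`ε_A·R_A > 0` and `ε_B·R_B > 0`. Here `coth β = cosh β / sinh β`. -/
theorem stmt13 (D RA RB : ℝ) (hD : D ≠ 0) (hRA : RA ≠ 0) (hRB : RB ≠ 0)
    (hDA : D ≠ RA) (hDB : D ≠ -RB) (hden : D * (D - RA + RB) ≠ 0)
    (hJ : (RA - D) * (RB + D) / (D * (D - RA + RB)) < -1)
    (s : ℝ) (hs : s = 1 ∨ s = -1) (hsgn : s * (RA * (RA - D)) > 0)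
    (β : ℝ) (hβ : β ≠ 0)
    (hcoth : (Real.cosh β / Real.sinh β) ^ 2 =
      -((RA - D) * (RB + D) / (D * (D - RA + RB))))
    (hβD : β * D > 0)
    (εA εB : ℝ)
    (hεA : εA = s * (D / (RA - D)) * (Real.cosh β / Real.sinh β))
    (hεB : εB = s * (D / (RB + D)) * (Real.cosh β / Real.sinh β)) :
    εA * RA > 0 ∧ εB * RB > 0 := by
  have hdc := mul_cosh_div_sinh_pos hβD
  have hB : 0 < s * (RB * (RB + D)) := by
    have h := mul_mul_pos_of_diffraction_lt_neg_one hden hJ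
    rcases hs with rfl | rfl
    · rw [one_mul] at hsgn ⊢
      exact (mul_pos_iff_of_pos_left hsgn).1 h
    · refine (mul_pos_iff_of_pos_left hsgn).1 ?_
      linarith
  subst hεA hεB
  exact ⟨mul_div_mul_mul_pos hsgn hdc, mul_div_mul_mul_pos hB hdc⟩
end

section
/- Let D, R_A, R_B be real numbers with D ≠ 0 and D·(D − R_A + R_B) ≠ 0, and suppose that J = (R_A − D)(R_B + D)/(D·(D − R_A + R_B)) satisfies −1 < J < 0. Then R_A·(R_A − D) and R_B·(R_B + D) are nonzero and have opposite signs; equivalently, R_A·(R_A − D)·R_B·(R_B + D) < 0. -/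
/-- If the diffraction parameter `J = (R_A − D)(R_B + D)/(D(D − R_A + R_B))` satisfies
`−1 < J < 0`, then `R_A(R_A − D)` and `R_B(R_B + D)` are nonzero and have opposite signs. -/
theorem stmt14 (D RA RB : ℝ) (hD : D ≠ 0) (hden : D * (D - RA + RB) ≠ 0)
    (hJ1 : -1 < (RA - D) * (RB + D) / (D * (D - RA + RB)))
    (hJ2 : (RA - D) * (RB + D) / (D * (D - RA + RB)) < 0) :
    RA * (RA - D) * (RB * (RB + D)) < 0 := by
  set q := D * (D - RA + RB) with hq
  set J := (RA - D) * (RB + D) / q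
  have h₁ : J * q = (RA - D) * (RB + D) := div_mul_cancel₀ _ hden
  have h₂ : (J + 1) * q = RA * RB := by
    rw [add_mul, h₁, hq]
    ring
  calc RA * (RA - D) * (RB * (RB + D)) = J * (J + 1) * q ^ 2 := by
        linear_combination -(RA * RB) * h₁ - J * q * h₂
    _ < 0 := mul_neg_of_neg_of_pos (mul_neg_of_neg_of_pos hJ2 (by linarith))
        (by positivity)
end

section
/- Let D, R_A, R_B be nonzero real numbers with D ≠ R_A, D ≠ −R_B, D·(D − R_A + R_B) ≠ 0, and suppose that J = (R_A − D)(R_B + D)/(D·(D − R_A + R_B)) satisfies −1 < J < 0. Let s ∈ {1, −1} be such that s·R_A·(R_A − D) > 0, and let β be a nonzero real number with coth²β = −1/J and β·D > 0. Define ε_A = s·(D/(R_A − D))·(1/coth β) and ε_B = −s·(D/(R_B + D))·(1/coth β). Then ε_A·R_A > 0 and ε_B·R_B > 0. -/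
/-- Lemma 5: for `−1 < J < 0`, with `s` the sign of `R_A(R_A − D)`, `coth²β = −1/J` and
`βD > 0`, the parameters `ε_A = s·(D/(R_A − D))·(1/coth β)` and
`ε_B = −s·(D/(R_B + D))·(1/coth β)` satisfy `ε_A·R_A > 0` and `ε_B·R_B > 0`.
Here `coth β = cosh β / sinh β`. -/
theorem stmt15 (D RA RB : ℝ) (hD : D ≠ 0) (hRA : RA ≠ 0) (hRB : RB ≠ 0)
    (hDA : D ≠ RA) (hDB : D ≠ -RB) (hden : D * (D - RA + RB) ≠ 0)
    (hJ1 : -1 < (RA - D) * (RB + D) / (D * (D - RA + RB)))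
    (hJ2 : (RA - D) * (RB + D) / (D * (D - RA + RB)) < 0)
    (s : ℝ) (hs : s = 1 ∨ s = -1) (hsgn : s * (RA * (RA - D)) > 0)
    (β : ℝ) (hβ : β ≠ 0)
    (hcoth : (Real.cosh β / Real.sinh β) ^ 2 =
      -(1 / ((RA - D) * (RB + D) / (D * (D - RA + RB)))))
    (hβD : β * D > 0)
    (εA εB : ℝ)
    (hεA : εA = s * (D / (RA - D)) * (1 / (Real.cosh β / Real.sinh β)))
    (hεB : εB = -s * (D / (RB + D)) * (1 / (Real.cosh β / Real.sinh β))) :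
    εA * RA > 0 ∧ εB * RB > 0 := by
  have hA : RA - D ≠ 0 := sub_ne_zero.mpr hDA.symm
  have hB : RB + D ≠ 0 := fun h => hDB (by linarith)
  have hJ_add_one : (RA - D) * (RB + D) / (D * (D - RA + RB)) + 1
      = RA * RB / (D * (D - RA + RB)) := by
    rw [div_add_one hden]
    ring
  have hRAB : 0 < RA * RB / (D * (D - RA + RB)) := by linarith
  have hneg : (RA * (RA - D)) * (RB * (RB + D)) < 0 := by
    have h := mul_neg_of_pos_of_neg hRAB hJ2
    rw [div_mul_div_comm, div_neg_iff] at h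
    rcases h with h | h
    · linarith [mul_self_nonneg (D * (D - RA + RB))]
    · linarith [h.1]
  have hsgnB : 0 < -s * (RB * (RB + D)) := by
    have hs2 : s * s = 1 := by rcases hs with rfl | rfl <;> norm_num
    have h : (s * (RA * (RA - D))) * (-s * (RB * (RB + D))) =
        -((RA * (RA - D)) * (RB * (RB + D))) := by
      linear_combination (-(RA * (RA - D)) * (RB * (RB + D))) * hs2
    exact pos_of_mul_pos_right (h ▸ neg_pos.mpr hneg) hsgn.le
  have hDcoth : 0 < D * (1 / (Real.cosh β / Real.sinh β)) := by
    rw [one_div_div, ← mul_div_assoc]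
    refine div_pos ?_ (Real.cosh_pos β)
    rcases pos_and_pos_or_neg_and_neg_of_mul_pos hβD with ⟨h, h'⟩ | ⟨h, h'⟩
    · exact mul_pos h' (Real.sinh_pos_iff.mpr h)
    · exact mul_pos_of_neg_of_neg h' (Real.sinh_neg_iff.mpr h)
  generalize 1 / (Real.cosh β / Real.sinh β) = t at *
  constructor
  · have h : εA * RA = s * (RA * (RA - D)) * (D * t) / (RA - D) ^ 2 := by
      rw [hεA]
      field_simp
    rw [h]
    exact div_pos (mul_pos hsgn hDcoth) (by positivity)
  · have h : εB * RB = -s * (RB * (RB + D)) * (D * t) / (RB + D) ^ 2 := by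
      rw [hεB]
      field_simp
    rw [h]
    exact div_pos (mul_pos hsgnB hDcoth) (by positivity)
end

section
/- Let λ > 0 and let D, R_A, R_B be nonzero real numbers with D ≠ R_A, D ≠ −R_B, D·(D − R_A + R_B) ≠ 0, and suppose J = (R_A − D)(R_B + D)/(D·(D − R_A + R_B)) < −1. Let s ∈ {1, −1} satisfy s·R_A·(R_A − D) > 0, and let β be a nonzero real number with coth²β = −J and β·D > 0. Set ε_A = s·(D/(R_A − D))·coth β and ε_B = s·(D/(R_B + D))·coth β. Let U_A ∈ 𝓢(ℝ², ℂ), let U_B : ℝ² → ℂ be given by the diffraction formula, and define the reduced field amplitudes u_A(ρ) = √(λ·ε_A·R_A)·U_A(√(λ·ε_A·R_A)·ρ) and u_B(ρ') = √(λ·ε_B·R_B)·U_B(√(λ·ε_B·R_B)·ρ'). Then for every ρ' ∈ ℝ², u_B(ρ') = s·e^{−sβ}·H_{sβ}[u_A](s·ρ'); in particular u_B(ρ') = e^{−β}·H_β[u_A](ρ') if s = 1, and u_B(ρ') = −e^{β}·H_{−β}[u_A](−ρ') if s = −1. -/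
open MeasureTheory Filter
open scoped RealInnerProductSpace

noncomputable section

/-- Scalar diffraction formula: the field transfer from a spherical emitter of radius `RA`
to a spherical receiver of radius `RB` at distance `D`, with wavelength `lam`. -/
def diffract (lam D RA RB : ℝ) (UA : Plane → ℂ) (r' : Plane) : ℂ :=
  Complex.I / (lam * D) *
    Complex.exp (-(Complex.I * Real.pi / lam * ((1 / RB + 1 / D) * ‖r'‖ ^ 2))) *
    ∫ r : Plane,
      Complex.exp (-(Complex.I * Real.pi / lam * ((1 / D - 1 / RA) * ‖r‖ ^ 2))) *
      Complex.exp (2 * Real.pi * Complex.I * ⟪r, r'⟫ / (lam * D)) * UA r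

/-- Change of variables `r = k ρ` in the Euclidean plane. -/
theorem integral_eq_sq_mul_integral_comp_smul {k : ℝ} (hk : 0 < k) (f : Plane → ℂ) :
    ∫ r, f r = (k : ℂ) ^ 2 * ∫ ρ, f (k • ρ) := by
  have hk' : (k : ℂ) ≠ 0 := by exact_mod_cast hk.ne'
  rw [Measure.integral_comp_smul volume f k, finrank_euclideanSpace_fin,
    abs_of_nonneg (by positivity), Complex.real_smul]
  push_cast
  field_simp

/-- The diffraction formula in rescaled coordinates `r = p ρ`, `r' = q ρ'`. -/
theorem diffract_smul {lam D RA RB p q c S : ℝ} (hlam : lam ≠ 0) (hp : 0 < p)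
    (hA : (1 / D - 1 / RA) * p ^ 2 = lam * c)
    (hB : (1 / RB + 1 / D) * q ^ 2 = lam * c) (hpq : p * q / (lam * D) = 1 / S)
    (UA : Plane → ℂ) (ρ' : Plane) :
    (q : ℂ) * diffract lam D RA RB UA (q • ρ') =
      Complex.I / S * Complex.exp (-(Complex.I * Real.pi * ‖ρ'‖ ^ 2 * c)) *
        ∫ ρ : Plane, Complex.exp (-(Complex.I * Real.pi * ‖ρ‖ ^ 2 * c)) *
          Complex.exp (2 * Real.pi * Complex.I * ⟪ρ', ρ⟫ / S) * (p * UA (p • ρ)) := by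
  have hlam' : (lam : ℂ) ≠ 0 := by exact_mod_cast hlam
  have hA' : (1 / (D : ℂ) - 1 / RA) * p ^ 2 = lam * c := by exact_mod_cast hA
  have hB' : (1 / (RB : ℂ) + 1 / D) * q ^ 2 = lam * c := by exact_mod_cast hB
  have hpq' : (p : ℂ) * q / (lam * D) = 1 / S := by exact_mod_cast hpq
  have hnorm (k : ℝ) (x : Plane) : ((‖k • x‖ : ℝ) : ℂ) ^ 2 = k ^ 2 * ‖x‖ ^ 2 := by
    rw [norm_smul, ← Complex.ofReal_pow, mul_pow, Real.norm_eq_abs, sq_abs]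
    push_cast
    rfl
  have hquad {e k : ℂ} (h : e * k ^ 2 = lam * c) (n : ℂ) :
      Complex.I * Real.pi / lam * (e * (k ^ 2 * n)) = Complex.I * Real.pi * n * c := by
    rw [← mul_assoc e, h]
    field_simp
  have hcross (ρ : Plane) : 2 * Real.pi * Complex.I * (⟪p • ρ, q • ρ'⟫ : ℝ) / (lam * D) =
      2 * Real.pi * Complex.I * (⟪ρ', ρ⟫ : ℝ) / S := by
    rw [real_inner_smul_left, real_inner_smul_right, real_inner_comm]
    push_cast
    linear_combination (2 * Real.pi * Complex.I * (⟪ρ', ρ⟫ : ℝ)) * hpq'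
  rw [diffract, integral_eq_sq_mul_integral_comp_smul hp]
  simp only [hnorm, hquad hA', hquad hB', hcross, mul_left_comm _ (p : ℂ), integral_const_mul]
  linear_combination (Complex.I * Complex.exp (-(Complex.I * Real.pi * ‖ρ'‖ ^ 2 * c)) * p *
    ∫ ρ : Plane, Complex.exp (-(Complex.I * Real.pi * ‖ρ‖ ^ 2 * c)) *
      Complex.exp (2 * Real.pi * Complex.I * (⟪ρ', ρ⟫ : ℝ) / S) * UA (p • ρ)) * hpq'

/-- For `s = ±1`, the rescaled and reflected transform `s e^(-sβ) H_{sβ}[f](s ρ')`. -/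
theorem fracH_sign {s : ℝ} (hs : s = 1 ∨ s = -1) (β : ℝ) (f : Plane → ℂ) (ρ' : Plane) :
    s * Real.exp (-(s * β)) * fracH (s * β) f (s • ρ') =
      Complex.I / Real.sinh β * Complex.exp (-(Complex.I * Real.pi * ‖ρ'‖ ^ 2 *
        (s * (Real.cosh β / Real.sinh β) : ℝ))) *
        ∫ ρ : Plane, Complex.exp (-(Complex.I * Real.pi * ‖ρ‖ ^ 2 *
          (s * (Real.cosh β / Real.sinh β) : ℝ))) *
          Complex.exp (2 * Real.pi * Complex.I * ⟪ρ', ρ⟫ / Real.sinh β) * f ρ := by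
  have hexp (x : ℝ) : ((Real.exp (-x) : ℝ) : ℂ) * (Real.exp x : ℝ) = 1 := by
    rw [← Complex.ofReal_mul, ← Real.exp_add]
    simp
  rcases hs with rfl | rfl
  · simp only [fracH, one_mul, one_smul, Complex.ofReal_one, Complex.ofReal_div]
    simp only [div_eq_mul_inv, ← mul_assoc]
    rw [mul_right_comm _ Complex.I, hexp, one_mul]
  · simp only [fracH, neg_mul, one_mul, neg_smul, one_smul, norm_neg, inner_neg_left, neg_neg,
      Real.sinh_neg, Real.cosh_neg, Complex.ofReal_neg, Complex.ofReal_one, Complex.ofReal_div,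
      div_neg, mul_neg, neg_div]
    simp only [div_eq_mul_inv, ← mul_assoc]
    rw [mul_right_comm _ Complex.I, mul_comm (Complex.ofReal _), hexp, one_mul]

/-- Theorem 1: for `J < −1`, the diffraction field transfer is expressed as a hyperbolic
fractional Fourier transformation of the first kind:
`u_B(ρ') = s·e^(−sβ)·H_{sβ}[u_A](s·ρ')`. -/
theorem stmt16 (lam D RA RB : ℝ) (hlam : 0 < lam)
    (hD : D ≠ 0) (hRA : RA ≠ 0) (hRB : RB ≠ 0) (hDA : D ≠ RA) (hDB : D ≠ -RB)
    (hden : D * (D - RA + RB) ≠ 0)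
    (hJ : (RA - D) * (RB + D) / (D * (D - RA + RB)) < -1)
    (s : ℝ) (hs : s = 1 ∨ s = -1) (hsgn : s * (RA * (RA - D)) > 0)
    (β : ℝ) (hβ : β ≠ 0)
    (hcoth : (Real.cosh β / Real.sinh β) ^ 2 =
      -((RA - D) * (RB + D) / (D * (D - RA + RB))))
    (hβD : β * D > 0)
    (εA εB : ℝ)
    (hεA : εA = s * (D / (RA - D)) * (Real.cosh β / Real.sinh β))
    (hεB : εB = s * (D / (RB + D)) * (Real.cosh β / Real.sinh β))
    (UA : SchwartzMap Plane ℂ) (UB uA uB : Plane → ℂ)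
    (hUB : ∀ r', UB r' = diffract lam D RA RB (⇑UA) r')
    (huA : ∀ ρ, uA ρ = Real.sqrt (lam * εA * RA) *
      UA (Real.sqrt (lam * εA * RA) • ρ))
    (huB : ∀ ρ', uB ρ' = Real.sqrt (lam * εB * RB) *
      UB (Real.sqrt (lam * εB * RB) • ρ'))
    (ρ' : Plane) :
    uB ρ' = s * Real.exp (-(s * β)) * fracH (s * β) uA (s • ρ') := by
  have hRAD : RA - D ≠ 0 := sub_ne_zero.mpr hDA.symm
  have hRBD : RB + D ≠ 0 := fun h => hDB (by linarith)
  have hE : D - RA + RB ≠ 0 := right_ne_zero_of_mul hden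
  have hS : Real.sinh β ≠ 0 := Real.sinh_ne_zero.mpr hβ
  have hs2 : s ^ 2 = 1 := by rcases hs with rfl | rfl <;> norm_num
  have hDS : 0 < D / Real.sinh β := by
    rcases lt_or_gt_of_ne hβ with h | h
    · exact div_pos_of_neg_of_neg (by nlinarith) (Real.sinh_neg_iff.mpr h)
    · exact div_pos (by nlinarith) (Real.sinh_pos_iff.mpr h)
  have hprod : 0 < (RA * (RA - D)) * (RB * (RB + D)) := by
    have h1 : RA * RB / (D * (D - RA + RB)) < 0 := by
      have : RA * RB / (D * (D - RA + RB)) =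
          (RA - D) * (RB + D) / (D * (D - RA + RB)) + 1 := by
        field_simp
        ring
      linarith
    have h2 : (RA - D) * (RB + D) / (D * (D - RA + RB)) < 0 := by linarith
    have h3 := mul_pos (mul_pos_of_neg_of_neg h1 h2) (sq_pos_of_ne_zero hden)
    have h4 : RA * RB / (D * (D - RA + RB)) * ((RA - D) * (RB + D) / (D * (D - RA + RB))) *
        (D * (D - RA + RB)) ^ 2 = (RA * (RA - D)) * (RB * (RB + D)) := by
      field_simp
    rwa [h4] at h3
  have hsgnB : 0 < s * (RB * (RB + D)) := by
    refine pos_of_mul_pos_right (a := s * (RA * (RA - D))) ?_ hsgn.le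
    calc 0 < s ^ 2 * ((RA * (RA - D)) * (RB * (RB + D))) := by rw [hs2, one_mul]; exact hprod
      _ = _ := by ring
  have hC := Real.cosh_pos β
  have ha : 0 < lam * εA * RA := by
    have : lam * εA * RA = lam * (s * (RA * (RA - D))) * Real.cosh β *
        (D / Real.sinh β) / (RA - D) ^ 2 := by
      rw [hεA]
      field_simp
    rw [this]
    positivity
  have hb : 0 < lam * εB * RB := by
    have : lam * εB * RB = lam * (s * (RB * (RB + D))) * Real.cosh β *
        (D / Real.sinh β) / (RB + D) ^ 2 := by
      rw [hεB]
      field_simp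
    rw [this]
    positivity
  have hinv : 1 / Real.sinh β ^ 2 = -(RA * RB / (D * (D - RA + RB))) := by
    have h : 1 / Real.sinh β ^ 2 = (Real.cosh β / Real.sinh β) ^ 2 - 1 := by
      field_simp
      linarith [Real.cosh_sq β]
    rw [h, hcoth]
    field_simp
    ring
  have hab : (lam * εA * RA) * (lam * εB * RB) = (lam * (D / Real.sinh β)) ^ 2 := by
    calc (lam * εA * RA) * (lam * εB * RB)
        = s ^ 2 * lam ^ 2 * D ^ 2 * RA * RB / ((RA - D) * (RB + D)) *
            (Real.cosh β / Real.sinh β) ^ 2 := by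
          rw [hεA, hεB]
          field_simp
      _ = lam ^ 2 * D ^ 2 * (-(RA * RB / (D * (D - RA + RB)))) := by
          rw [hcoth, hs2]
          field_simp
      _ = _ := by
          rw [← hinv]
          field_simp
  have hpq : √(lam * εA * RA) * √(lam * εB * RB) / (lam * D) = 1 / Real.sinh β := by
    rw [← Real.sqrt_mul ha.le, hab, Real.sqrt_sq (by positivity)]
    field_simp
  rw [fracH_sign hs, huB, hUB, diffract_smul (c := s * (Real.cosh β / Real.sinh β)) hlam.ne'
    (Real.sqrt_pos.mpr ha) ?_ ?_ hpq]
  · simp only [huA]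
  · rw [Real.sq_sqrt ha.le, hεA]
    field_simp
  · rw [Real.sq_sqrt hb.le, hεB]
    field_simp
    ring

end
end

section
/- Let n, n', d, d', R_D be nonzero real numbers, let β and β' be nonzero real numbers, and let s, s' ∈ {1, −1}. Assume the reduced-variable matching condition s'·n'·(R_D − d')/(d'·coth β') = −s·n·(R_D − d)/(d·coth β) and the imaging condition s·β + s'·β' = 0. Then the conjugation formula of the refracting spherical cap holds: n'/d' = n/d + (n' − n)/R_D. -/
/-- Conjugation formula for the refracting spherical cap: under the reduced-variable
matching condition `s'·n'·(R_D − d')/(d'·coth β') = −s·n·(R_D − d)/(d·coth β)` and the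
imaging condition `s·β + s'·β' = 0`, one has `n'/d' = n/d + (n' − n)/R_D`.
Here `coth β = cosh β / sinh β`. -/
theorem stmt19 (n n' d d' RD β β' s s' : ℝ)
    (hn : n ≠ 0) (hn' : n' ≠ 0) (hd : d ≠ 0) (hd' : d' ≠ 0) (hRD : RD ≠ 0)
    (hβ : β ≠ 0) (hβ' : β' ≠ 0)
    (hs : s = 1 ∨ s = -1) (hs' : s' = 1 ∨ s' = -1)
    (hmatch : s' * n' * (RD - d') / (d' * (Real.cosh β' / Real.sinh β')) =
      -(s * n * (RD - d) / (d * (Real.cosh β / Real.sinh β))))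
    (himg : s * β + s' * β' = 0) :
    n' / d' = n / d + (n' - n) / RD := by
  have hsinh : Real.sinh β ≠ 0 := Real.sinh_ne_zero.2 hβ
  have hcosh : Real.cosh β ≠ 0 := (Real.cosh_pos β).ne'
  have key : n' * (RD - d') / d' = n * (RD - d) / d := by
    rcases hs with rfl | rfl <;> rcases hs' with rfl | rfl
    · obtain rfl : β' = -β := by linarith
      rw [Real.cosh_neg, Real.sinh_neg] at hmatch
      field_simp at hmatch ⊢
      linarith
    · obtain rfl : β' = β := by linarith
      field_simp at hmatch ⊢
      linarith
    · obtain rfl : β' = β := by linarith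
      field_simp at hmatch ⊢
      linarith
    · obtain rfl : β' = -β := by linarith
      rw [Real.cosh_neg, Real.sinh_neg] at hmatch
      field_simp at hmatch ⊢
      linarith
  field_simp at key ⊢
  linarith
end
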